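/- arXiv:1808.03615 — 4 statements merged into one kernel-verified Lean document; each statement's English description precedes it below -/
import Mathlib

section
/- Every Steiner triple system Y1 with at least 3 points is a subsystem of a Steiner triple system Z on 4|Y1|+3 points (namely Z = 2(2Y1+1)+1) that is PG(3,2)-2-pointed with respect to some pair of its points; moreover 4|Y1|+3 ≡ 7 (mod 8). -/
open Finset

noncomputable section
open scoped Classical

/-- `T` is the set of triples of a Steiner triple system on the finite type `α`:
every pair of distinct points lies in exactly one triple. -/
def IsSTS {α : Type*} (T : Finset (Finset α)) : Prop :=
  (∀ t ∈ T, t.card = 3) ∧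
    ∀ p q : α, p ≠ q → ∃! t : Finset α, t ∈ T ∧ p ∈ t ∧ q ∈ t

/-- `T` is the set of triples of a partial Steiner triple system on `α`:
every pair of distinct points lies in at most one triple. -/
def IsPSTS {α : Type*} (T : Finset (Finset α)) : Prop :=
  (∀ t ∈ T, t.card = 3) ∧
    ∀ p q : α, p ≠ q → ∀ t₁ ∈ T, ∀ t₂ ∈ T, p ∈ t₁ → q ∈ t₁ → p ∈ t₂ → q ∈ t₂ → t₁ = t₂

/-- `W` is a (closed) subsystem of the triple system `T`. -/
def IsSub {α : Type*} (T : Finset (Finset α)) (W : Finset α) : Prop :=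
  ∀ t ∈ T, 2 ≤ (t ∩ W).card → t ⊆ W

/-- `g` is an automorphism of the triple system `T`. -/
def IsAut {α : Type*} (T : Finset (Finset α)) (g : Equiv.Perm α) : Prop :=
  ∀ t : Finset α, t ∈ T ↔ t.image g ∈ T

/-- The automorphism group of a triple system, as a subgroup of the permutation group. -/
def autGroup {α : Type*} (T : Finset (Finset α)) : Subgroup (Equiv.Perm α) where
  carrier := {g : Equiv.Perm α | IsAut T g}
  one_mem' := by
    intro t
    simp
  mul_mem' := by
    intro a b ha hb t
    have h1 := hb t
    have h2 := ha (t.image b)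
    have key : t.image ⇑(a * b) = (t.image ⇑b).image ⇑a := by
      rw [Equiv.Perm.coe_mul, Finset.image_image]
    rw [key, ← h2]
    exact h1
  inv_mem' := by
    intro a ha t
    have h := ha (t.image ⇑a⁻¹)
    have key : (t.image ⇑a⁻¹).image ⇑a = t := by
      rw [Finset.image_image]
      have hc : (⇑a ∘ ⇑a⁻¹) = id := by
        funext x
        simp
      rw [hc, Finset.image_id]
    rw [key] at h
    exact h.symm

/-- `φ` embeds the triple system `S` onto a subsystem of `T`: it is injective, maps
triples of `S` to triples of `T`, and the triples of `T` inside the image of `φ` are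
precisely the images of the triples of `S`. -/
def IsCopy {α β : Type*} [Fintype α] (S : Finset (Finset α)) (T : Finset (Finset β))
    (φ : α → β) : Prop :=
  Function.Injective φ ∧ (∀ s ∈ S, s.image φ ∈ T) ∧
    ∀ t ∈ T, t ⊆ Finset.univ.image φ → ∃ s ∈ S, t = s.image φ

/-- The point set `W` is invariant under every automorphism of `T`. -/
def AutInvariant {β : Type*} (T : Finset (Finset β)) (W : Finset β) : Prop :=
  ∀ g : Equiv.Perm β, IsAut T g → W.image g = W

/-- For the copy of `S` inside `T` given by `φ`, restriction gives a group isomorphism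
from `Aut T` onto `Aut S`: every automorphism of `T` induces (via `φ`) an automorphism
of `S`, and every automorphism of `S` is induced by exactly one automorphism of `T`. -/
def AutRestrictIso {α β : Type*} (T : Finset (Finset β)) (S : Finset (Finset α))
    (φ : α → β) : Prop :=
  (∀ g : Equiv.Perm β, IsAut T g →
      ∃ h : Equiv.Perm α, IsAut S h ∧ ∀ x : α, g (φ x) = φ (h x)) ∧
    ∀ h : Equiv.Perm α, IsAut S h →
      ∃! g : Equiv.Perm β, IsAut T g ∧ ∀ x : α, g (φ x) = φ (h x)

/-- `φ` embeds `S` as an `Aut T`-invariant subsystem of `T` on which `Aut T` induces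
the full automorphism group of `S`, with `Aut T ≅ Aut S` via restriction. -/
def FullEmbedding {α β : Type*} [Fintype α] (S : Finset (Finset α)) (T : Finset (Finset β))
    (φ : α → β) : Prop :=
  IsCopy S T φ ∧ AutInvariant T (Finset.univ.image φ) ∧ AutRestrictIso T S φ

/-- The points of the projective space `PG(n,2)`: nonzero vectors of `GF(2)^{n+1}`. -/
abbrev PGPoint (n : ℕ) := {x : Fin (n + 1) → ZMod 2 // x ≠ 0}

/-- The lines of `PG(n,2)`: 3-sets of nonzero vectors summing to `0`. -/
def PGTriples (n : ℕ) : Finset (Finset (PGPoint n)) :=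
  Finset.univ.filter fun t : Finset (PGPoint n) =>
    t.card = 3 ∧ ∑ v ∈ t, (v : Fin (n + 1) → ZMod 2) = 0

/-- The smallest subsystem of `T` containing the point set `P`. -/
def GeneratedSub {α : Type*} [Fintype α] (T : Finset (Finset α)) (P : Finset α) : Finset α :=
  Finset.univ.filter fun x => ∀ W : Finset α, IsSub T W → P ⊆ W → x ∈ W

/-- `W` is a subsystem of `T` isomorphic to `PG(n,2)`. -/
def IsPGSub {α : Type*} [Fintype α] (n : ℕ) (T : Finset (Finset α)) (W : Finset α) : Prop :=
  ∃ φ : PGPoint n → α, IsCopy (PGTriples n) T φ ∧ Finset.univ.image φ = W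

/-- A triple system is `PG(2,2)`-paired if any two distinct points lie in at least two
subsystems isomorphic to `PG(2,2)`. -/
def PG22Paired {α : Type*} [Fintype α] (T : Finset (Finset α)) : Prop :=
  ∀ p q : α, p ≠ q → ∃ W₁ W₂ : Finset α, W₁ ≠ W₂ ∧
    (p ∈ W₁ ∧ q ∈ W₁ ∧ IsPGSub 2 T W₁) ∧ p ∈ W₂ ∧ q ∈ W₂ ∧ IsPGSub 2 T W₂

/-- `T` is `PG(3,2)`-2-pointed with respect to the points `p, q`: any four points
including `p` and `q` generate a subsystem isomorphic to `PG(2,2)` or `PG(3,2)`. -/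
def PG32TwoPointed {α : Type*} [Fintype α] (T : Finset (Finset α)) (p q : α) : Prop :=
  p ≠ q ∧ ∀ s : Finset α, s.card = 4 → p ∈ s → q ∈ s →
    IsPGSub 2 T (GeneratedSub T s) ∨ IsPGSub 3 T (GeneratedSub T s)

/-- The copy of `Y` inside `2Y+1`. -/
def dp0 {γ : Type*} (a : γ) : γ ⊕ γ ⊕ Unit := Sum.inl a

/-- The disjoint copy `Y₁` of `Y` inside `2Y+1`. -/
def dp1 {γ : Type*} (a : γ) : γ ⊕ γ ⊕ Unit := Sum.inr (Sum.inl a)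

/-- The extra point `*` of `2Y+1`. -/
def dpStar {γ : Type*} : γ ⊕ γ ⊕ Unit := Sum.inr (Sum.inr ())

/-- The triples of the Steiner triple system `2Y+1` built from a system `Y` with
triple set `T`. -/
def DoubleTriples {γ : Type*} [Fintype γ] (T : Finset (Finset γ)) :
    Finset (Finset (γ ⊕ γ ⊕ Unit)) :=
  Finset.univ.filter fun t : Finset (γ ⊕ γ ⊕ Unit) =>
    (∃ s ∈ T, t = s.image dp0) ∨
    (∃ a : γ, t = {dpStar, dp0 a, dp1 a}) ∨
    (∃ a b c : γ, ({a, b, c} : Finset γ) ∈ T ∧ t = {dp1 a, dp1 b, dp0 c})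

/-- The triples of the direct product of two triple systems. -/
def ProdTriples {α β : Type*} [Fintype α] [Fintype β]
    (TA : Finset (Finset α)) (TB : Finset (Finset β)) : Finset (Finset (α × β)) :=
  Finset.univ.filter fun t : Finset (α × β) =>
    (∃ a : α, ∃ s ∈ TB, t = s.image fun b => (a, b)) ∨
    (∃ b : β, ∃ s ∈ TA, t = s.image fun a => (a, b)) ∨
    (∃ a₁ a₂ a₃ : α, ∃ b₁ b₂ b₃ : β, ({a₁, a₂, a₃} : Finset α) ∈ TA ∧
      ({b₁, b₂, b₃} : Finset β) ∈ TB ∧ t = {(a₁, b₁), (a₂, b₂), (a₃, b₃)})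

/-- The triples of Moore's construction `U = X ∪ (V × A)`.  Here `TX` (on `δ`), `TV`
(on `α`), `TY` (on `γ`) are the triple sets of `X`, `V`, `Y`; `j : δ → γ` embeds `X`
as a subsystem of `Y` and `ℓ : A → γ` labels `Y − X` by the group `A`. -/
def MooreTriples {δ α γ A : Type*} [Fintype δ] [Fintype α] [Fintype A] [Group A]
    (TX : Finset (Finset δ)) (TV : Finset (Finset α)) (TY : Finset (Finset γ))
    (j : δ → γ) (ℓ : A → γ) : Finset (Finset (δ ⊕ α × A)) :=
  Finset.univ.filter fun t : Finset (δ ⊕ α × A) =>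
    (∃ s ∈ TX, t = s.image Sum.inl) ∨
    (∃ v : α, ∃ a₁ a₂ : A, ∃ x : δ, ({ℓ a₁, ℓ a₂, j x} : Finset γ) ∈ TY ∧
      t = {Sum.inr (v, a₁), Sum.inr (v, a₂), Sum.inl x}) ∨
    (∃ v : α, ∃ a₁ a₂ a₃ : A, ({ℓ a₁, ℓ a₂, ℓ a₃} : Finset γ) ∈ TY ∧
      t = {Sum.inr (v, a₁), Sum.inr (v, a₂), Sum.inr (v, a₃)}) ∨
    (∃ v₁ v₂ v₃ : α, ∃ a₁ a₂ a₃ : A, ({v₁, v₂, v₃} : Finset α) ∈ TV ∧ a₁ * a₂ * a₃ = 1 ∧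
      t = {Sum.inr (v₁, a₁), Sum.inr (v₂, a₂), Sum.inr (v₃, a₃)})

/-- The hypotheses of Moore's construction: `Y` and `V` are Steiner triple systems,
`A` is a cyclic group, `j` embeds `X` as a subsystem of `Y` (with triple set `TX`),
and `ℓ` is a bijective labeling of `Y − X` by `A`. -/
def MooreSetup {δ α γ A : Type*} [Fintype δ] [Group A]
    (TX : Finset (Finset δ)) (TV : Finset (Finset α)) (TY : Finset (Finset γ))
    (j : δ → γ) (ℓ : A → γ) : Prop :=
  IsSTS TY ∧ IsSTS TV ∧ IsCyclic A ∧ Function.Injective j ∧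
    IsSub TY (Finset.univ.image j) ∧ IsCopy TX TY j ∧
    Function.Injective ℓ ∧ Set.range ℓ = (Set.range j)ᶜ

/-- The subsystem `Y_v = X ∪ (v × A)` of Moore's construction. -/
def MooreY {δ α A : Type*} [Fintype δ] [Fintype A] (v : α) : Finset (δ ⊕ α × A) :=
  (Finset.univ.image (Sum.inl : δ → δ ⊕ α × A)) ∪
    Finset.univ.image fun a : A => (Sum.inr (v, a) : δ ⊕ α × A)

/-- A subsystem of type (3.1) of Moore's construction, where `ε` denotes the unique
involution `−1` of `A`: the seven points `x, (v_i, a_i), (v_i, −a_i)` for a triple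
`{v₁,v₂,v₃}` of `V`, with `a₁a₂a₃ = 1` and `{a_i, −a_i, x}` a triple of `Y`. -/
def MooreType31 {δ α γ A : Type*} [Group A] (TV : Finset (Finset α))
    (TY : Finset (Finset γ)) (j : δ → γ) (ℓ : A → γ) (ε : A)
    (W : Finset (δ ⊕ α × A)) : Prop :=
  ∃ v₁ v₂ v₃ : α, ∃ a₁ a₂ a₃ : A, ∃ x : δ,
    ({v₁, v₂, v₃} : Finset α) ∈ TV ∧ a₁ * a₂ * a₃ = 1 ∧
    ({ℓ a₁, ℓ (ε * a₁), j x} : Finset γ) ∈ TY ∧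
    ({ℓ a₂, ℓ (ε * a₂), j x} : Finset γ) ∈ TY ∧
    ({ℓ a₃, ℓ (ε * a₃), j x} : Finset γ) ∈ TY ∧
    W = {Sum.inl x, Sum.inr (v₁, a₁), Sum.inr (v₁, ε * a₁), Sum.inr (v₂, a₂),
         Sum.inr (v₂, ε * a₂), Sum.inr (v₃, a₃), Sum.inr (v₃, ε * a₃)}

/-- The point set of a family of triples. -/
def ptsOf {β : Type*} (T : Finset (Finset β)) : Finset β := T.sup id

/-- Adjacency of triples: two distinct triples of `T` meeting in a point. -/
def TriAdj {β : Type*} (T : Finset (Finset β)) (t s : Finset β) : Prop :=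
  t ∈ T ∧ s ∈ T ∧ t ≠ s ∧ (t ∩ s).Nonempty

/-- A partial Steiner triple system is cyclic if the graph whose vertices are its
triples, two joined when they meet, is a cycle (equivalently: it has at least three
triples, every triple meets exactly two others, and the graph is connected). -/
def IsCyclicPSTS {β : Type*} (T : Finset (Finset β)) : Prop :=
  3 ≤ T.card ∧ (∀ t ∈ T, (T.filter fun s => s ≠ t ∧ (s ∩ t).Nonempty).card = 2) ∧
    ∀ t ∈ T, ∀ s ∈ T, Relation.ReflTransGen (TriAdj T) t s

/-- The partial Steiner triple system `Q(z)` (for the parameter `n`), with triple set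
`T`, point set `P` and distinguished point `z`: two cyclic PSTSs `C₁, C₂` on
`2n+4` and `2n+6` points meeting exactly in the point `z`, which lies in two triples
of each, triples `{z, z'_i, z_i}` of `C_i` with `z'_i` in two triples of `C_i`, and a
new point `z'` in the single additional triple `{z'_1, z', z'_2}`. -/
def IsQ {β : Type*} (n : ℕ) (T : Finset (Finset β)) (P : Finset β) (z : β) : Prop :=
  ∃ C₁ C₂ : Finset (Finset β), ∃ z' z₁' z₂' z₁ z₂ : β,
    IsPSTS T ∧ IsCyclicPSTS C₁ ∧ IsCyclicPSTS C₂ ∧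
    (ptsOf C₁).card = 2 * n + 4 ∧ (ptsOf C₂).card = 2 * n + 6 ∧
    ptsOf C₁ ∩ ptsOf C₂ = {z} ∧
    (C₁.filter fun t => z ∈ t).card = 2 ∧ (C₂.filter fun t => z ∈ t).card = 2 ∧
    ({z, z₁', z₁} : Finset β) ∈ C₁ ∧ (C₁.filter fun t => z₁' ∈ t).card = 2 ∧
    ({z, z₂', z₂} : Finset β) ∈ C₂ ∧ (C₂.filter fun t => z₂' ∈ t).card = 2 ∧
    z' ∉ ptsOf C₁ ∪ ptsOf C₂ ∧
    T = C₁ ∪ C₂ ∪ {({z₁', z', z₂'} : Finset β)} ∧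
    P = ptsOf C₁ ∪ ptsOf C₂ ∪ {z'}

/-- Nonempty subsets of `β`: the points of the projective space `P` over `GF(2)`
built on a point set `β`. -/
abbrev NESet (β : Type*) := {s : Finset β // s.Nonempty}

/-- The triples of the projective space over `GF(2)` on the nonempty subsets of `β`:
3-sets of subsets with empty symmetric difference. -/
def sdTriples (β : Type*) [Fintype β] : Finset (Finset (NESet β)) :=
  Finset.univ.filter fun t : Finset (NESet β) =>
    ∃ a b c : NESet β, a ≠ b ∧ a ≠ c ∧ b ≠ c ∧ t = {a, b, c} ∧
      symmDiff (symmDiff a.1 b.1) c.1 = ∅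

/-- The singleton `{a}` as a point of the projective space. -/
def sEl {β : Type*} (a : β) : NESet β := ⟨{a}, Finset.singleton_nonempty a⟩

/-- The pair `{a,b}` as a point of the projective space. -/
def pEl {β : Type*} (a b : β) : NESet β := ⟨{a, b}, Finset.insert_nonempty a {b}⟩

/-- The triples of `P` removed in Cameron's construction, for each triple `{a,b,c}`
of `V'`. -/
def removedTriples {β : Type*} [Fintype β] (TV' : Finset (Finset β)) :
    Finset (Finset (NESet β)) :=
  Finset.univ.filter fun t : Finset (NESet β) =>
    ∃ a b c : β, ({a, b, c} : Finset β) ∈ TV' ∧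
      (t = {pEl a b, pEl a c, pEl b c} ∨ t = {sEl a, sEl b, pEl a b} ∨
       t = {sEl a, sEl c, pEl a c} ∨ t = {sEl b, sEl c, pEl b c})

/-- The new triples of Cameron's construction, for each triple `{a,b,c}` of `V'`. -/
def addedTriples {β : Type*} [Fintype β] (TV' : Finset (Finset β)) :
    Finset (Finset (NESet β)) :=
  Finset.univ.filter fun t : Finset (NESet β) =>
    ∃ a b c : β, ({a, b, c} : Finset β) ∈ TV' ∧
      (t = {sEl a, sEl b, sEl c} ∨ t = {sEl a, pEl a b, pEl a c} ∨
       t = {sEl b, pEl a b, pEl b c} ∨ t = {sEl c, pEl a c, pEl b c})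

/-- The Steiner triple system `U` of Cameron's construction obtained from the
projective space `P` and the partial system `V'`. -/
def CameronSTS {β : Type*} [Fintype β] (TV' : Finset (Finset β)) :
    Finset (Finset (NESet β)) :=
  (sdTriples β \ removedTriples TV') ∪ addedTriples TV'

section

/-- The classical decidable equality on a sum, which agrees with the one used for images of
point sets in an arbitrary system. -/
abbrev classicalDecidableEqSum (α β : Type*) : DecidableEq (α ⊕ β) :=
  fun a b => Classical.propDecidable (a = b)

/-- The classical decidable equality on the points of `PG(n,2)`. -/
abbrev classicalDecidableEqPGPoint (n : ℕ) : DecidableEq (PGPoint n) :=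
  fun a b => Classical.propDecidable (a = b)

attribute [local instance] classicalDecidableEqSum classicalDecidableEqPGPoint

theorem exists_eq_triple_of_mem {α : Type*} {t : Finset α} (h : t.card = 3) {a b : α}
    (ha : a ∈ t) (hb : b ∈ t) (hab : a ≠ b) : ∃ c, c ≠ a ∧ c ≠ b ∧ t = {a, b, c} := by
  have hb' : b ∈ t.erase a := mem_erase.2 ⟨hab.symm, hb⟩
  have h1 : ((t.erase a).erase b).card = 1 := by
    rw [card_erase_of_mem hb', card_erase_of_mem ha, h]
  obtain ⟨c, hc⟩ := card_eq_one.1 h1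
  have hc' : c ∈ (t.erase a).erase b := by simp [hc]
  simp only [mem_erase] at hc'
  exact ⟨c, hc'.2.1, hc'.1, by rw [← hc, insert_erase hb', insert_erase ha]⟩

theorem ne_of_triple_card {α : Type*} {a b c : α} (h : ({a, b, c} : Finset α).card = 3) :
    a ≠ b ∧ a ≠ c ∧ b ≠ c := by
  have h2 : ∀ x y : α, ({x, y} : Finset α).card ≠ 3 := fun x y hxy => by
    have := card_le_two (a := x) (b := y)
    omega
  refine ⟨?_, ?_, ?_⟩ <;> rintro rfl <;> simp [h2] at h

/-- A triple meeting a subsystem in two points lies inside it. -/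
theorem IsSub.mem {α : Type*} {T : Finset (Finset α)} {W : Finset α} (hW : IsSub T W)
    {t : Finset α} (ht : t ∈ T) {x y z : α} (hx : x ∈ t) (hy : y ∈ t) (hxy : x ≠ y)
    (hxW : x ∈ W) (hyW : y ∈ W) (hz : z ∈ t) : z ∈ W :=
  hW t ht (one_lt_card.2 ⟨x, mem_inter.2 ⟨hx, hxW⟩, y, mem_inter.2 ⟨hy, hyW⟩, hxy⟩) hz

theorem isSub_of_pairs {α : Type*} {T : Finset (Finset α)} {W : Finset α}
    (h : ∀ t ∈ T, ∀ x ∈ t, ∀ y ∈ t, x ≠ y → x ∈ W → y ∈ W → t ⊆ W) : IsSub T W := by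
  intro t ht h2
  obtain ⟨x, hx, y, hy, hxy⟩ := one_lt_card.1 h2
  rw [mem_inter] at hx hy
  exact h t ht x hx.1 y hy.1 hxy hx.2 hy.2

theorem isSub_singleton {α : Type*} (T : Finset (Finset α)) (a : α) : IsSub T {a} :=
  isSub_of_pairs fun _ _ _ _ _ _ hxy hx hy =>
    absurd ((mem_singleton.1 hx).trans (mem_singleton.1 hy).symm) hxy

theorem IsSTS.isSub_triple {α : Type*} {T : Finset (Finset α)} (hT : IsSTS T) {t : Finset α}
    (ht : t ∈ T) : IsSub T t :=
  isSub_of_pairs fun _ hs x hx y hy hxy hxt hyt =>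
    ((hT.2 x y hxy).unique ⟨hs, hx, hy⟩ ⟨ht, hxt, hyt⟩).subset

/-- The number of points of a nonempty Steiner triple system is odd. -/
theorem IsSTS.odd_card {α : Type*} [Fintype α] {T : Finset (Finset α)} (hT : IsSTS T) (p : α) :
    Odd (Fintype.card α) := by
  have hU : (T.filter (p ∈ ·)).biUnion (fun t => t.erase p) = univ.erase p := by
    ext q
    simp only [mem_biUnion, mem_filter, mem_erase, mem_univ, and_true]
    constructor
    · rintro ⟨t, -, h, -⟩
      exact h
    · intro h
      obtain ⟨t, ⟨ht, hp, hq⟩, -⟩ := hT.2 p q (Ne.symm h)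
      exact ⟨t, ⟨ht, hp⟩, h, hq⟩
  have hd : ∀ t ∈ T.filter (p ∈ ·), ∀ s ∈ T.filter (p ∈ ·), t ≠ s →
      Disjoint (t.erase p) (s.erase p) := by
    intro t ht s hs hts
    rw [mem_filter] at ht hs
    rw [disjoint_left]
    intro q hqt hqs
    rw [mem_erase] at hqt hqs
    exact hts ((hT.2 p q (Ne.symm hqt.1)).unique ⟨ht.1, ht.2, hqt.2⟩ ⟨hs.1, hs.2, hqs.2⟩)
  have hc := card_biUnion hd
  have h2 : ∀ t ∈ T.filter (p ∈ ·), (t.erase p).card = 2 := by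
    intro t ht
    rw [mem_filter] at ht
    rw [card_erase_of_mem ht.2, hT.1 t ht.1]
  rw [hU, sum_congr rfl h2, sum_const, smul_eq_mul, card_erase_of_mem (mem_univ p),
    card_univ] at hc
  have : 0 < Fintype.card α := Fintype.card_pos_iff.2 ⟨p⟩
  exact ⟨(T.filter (p ∈ ·)).card, by omega⟩

section Copies

variable {α β δ : Type*} [Fintype α] {S : Finset (Finset α)}
  {T : Finset (Finset β)} {U : Finset (Finset δ)} {φ : α → β} {ψ : β → δ}

theorem IsCopy.comp [Fintype β] (hψ : IsCopy T U ψ) (hφ : IsCopy S T φ) : IsCopy S U (ψ ∘ φ) := by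
  refine ⟨hψ.1.comp hφ.1, fun s hs => ?_, fun t ht htφ => ?_⟩
  · rw [← image_image]
    exact hψ.2.1 _ (hφ.2.1 s hs)
  · rw [← image_image] at htφ
    obtain ⟨s, hs, rfl⟩ := hψ.2.2 t ht (htφ.trans (image_subset_image (subset_univ _)))
    rw [image_subset_image_iff hψ.1] at htφ
    obtain ⟨r, hr, rfl⟩ := hφ.2.2 s hs htφ
    exact ⟨r, hr, image_image⟩

theorem IsCopy.symm [Fintype β] {e : α ≃ β} (he : IsCopy S T e) : IsCopy T S e.symm := by
  refine ⟨e.symm.injective, fun t ht => ?_, fun s hs _ => ⟨s.image e, he.2.1 s hs, ?_⟩⟩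
  · obtain ⟨s, hs, rfl⟩ := he.2.2 t ht (by simp [image_univ_equiv])
    simpa [image_image] using hs
  · simp [image_image]

/-- An injection mapping triples to triples is a copy when every pair of points of the source
lies in a triple and the target is a partial Steiner triple system. -/
theorem isCopy_of_isPSTS (hS : ∀ p q : α, p ≠ q → ∃ s ∈ S, p ∈ s ∧ q ∈ s) (hT : IsPSTS T)
    (hφ : Function.Injective φ) (h : ∀ s ∈ S, s.image φ ∈ T) : IsCopy S T φ := by
  refine ⟨hφ, h, fun t ht htφ => ?_⟩
  obtain ⟨x, hx, y, hy, hxy⟩ := one_lt_card.1 (show 1 < t.card by rw [hT.1 t ht]; norm_num)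
  obtain ⟨a, -, rfl⟩ := mem_image.1 (htφ hx)
  obtain ⟨b, -, rfl⟩ := mem_image.1 (htφ hy)
  obtain ⟨s, hs, has, hbs⟩ := hS a b fun hab => hxy (congrArg φ hab)
  exact ⟨s, hs, hT.2 _ _ hxy t ht _ (h s hs) hx hy (mem_image_of_mem φ has)
    (mem_image_of_mem φ hbs)⟩

end Copies

section Double

variable {α β : Type*} {S : Finset (Finset α)} {T : Finset (Finset β)}

theorem dp0_injective : Function.Injective (dp0 : β → β ⊕ β ⊕ Unit) := Sum.inl_injective

/-- The point set of `2W+1` inside `2Y+1`, for a point set `W` of `Y`. -/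
def doubleSet (W : Finset β) : Finset (β ⊕ β ⊕ Unit) :=
  W.image dp0 ∪ W.image dp1 ∪ {dpStar}

@[simp]
theorem dp0_mem_doubleSet {W : Finset β} {a : β} : dp0 a ∈ doubleSet W ↔ a ∈ W := by
  simp [doubleSet, dp0, dp1, dpStar]

@[simp]
theorem dp1_mem_doubleSet {W : Finset β} {a : β} : dp1 a ∈ doubleSet W ↔ a ∈ W := by
  simp [doubleSet, dp0, dp1, dpStar]

@[simp]
theorem dpStar_mem_doubleSet {W : Finset β} : dpStar ∈ doubleSet W := by
  simp [doubleSet]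

/-- The map `2X+1 → 2Y+1` induced by a map `X → Y`. -/
def doubleMap (φ : α → β) : α ⊕ α ⊕ Unit → β ⊕ β ⊕ Unit := Sum.map φ (Sum.map φ id)

theorem image_doubleMap [Fintype α] (φ : α → β) :
    univ.image (doubleMap φ) = doubleSet (univ.image φ) := by
  ext x
  rcases x with a | a | ⟨⟩ <;> simp [doubleSet, doubleMap, dp0, dp1, dpStar]

variable [Fintype β]

theorem mem_doubleTriples {t : Finset (β ⊕ β ⊕ Unit)} :
    t ∈ DoubleTriples T ↔ (∃ s ∈ T, t = s.image dp0) ∨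
      (∃ a : β, t = {dpStar, dp0 a, dp1 a}) ∨
      (∃ a b c : β, ({a, b, c} : Finset β) ∈ T ∧ t = {dp1 a, dp1 b, dp0 c}) := by
  simp only [DoubleTriples, mem_filter, mem_univ, true_and]
  congr!

theorem isCopy_dp0 (T : Finset (Finset β)) : IsCopy T (DoubleTriples T) dp0 := by
  refine ⟨dp0_injective, fun s hs => mem_doubleTriples.2 (Or.inl ⟨s, hs, rfl⟩),
    fun t ht htW => ?_⟩
  rcases mem_doubleTriples.1 ht with ⟨s, hs, rfl⟩ | ⟨a, rfl⟩ | ⟨a, b, c, -, rfl⟩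
  · exact ⟨s, hs, rfl⟩
  · simp [insert_subset_iff, dp0, dpStar] at htW
  · simp [insert_subset_iff, dp0, dp1] at htW

theorem IsSub.image_dp0 {W : Finset β} (hW : IsSub T W) :
    IsSub (DoubleTriples T) (W.image dp0) := by
  refine isSub_of_pairs fun t ht x hx y hy hxy hxW hyW => ?_
  obtain ⟨u, hu, rfl⟩ := mem_image.1 hxW
  obtain ⟨v, hv, rfl⟩ := mem_image.1 hyW
  rcases mem_doubleTriples.1 ht with ⟨s, hs, rfl⟩ | ⟨a, rfl⟩ | ⟨a, b, c, -, rfl⟩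
  · rw [dp0_injective.mem_finset_image] at hx hy
    exact image_subset_image fun w hw =>
      hW.mem hs hx hy (fun h => hxy (congrArg _ h)) hu hv hw
  · simp [dp0, dp1, dpStar] at hx hy hxy
    exact absurd (hx.trans hy.symm) hxy
  · simp [dp0, dp1] at hx hy hxy
    exact absurd (hx.trans hy.symm) hxy

theorem IsSub.doubleSet (hT : ∀ t ∈ T, t.card = 3) {W : Finset β} (hW : IsSub T W) :
    IsSub (DoubleTriples T) (doubleSet W) := by
  refine isSub_of_pairs fun t ht x hx y hy hxy hxW hyW => ?_
  rcases mem_doubleTriples.1 ht with ⟨s, hs, rfl⟩ | ⟨a, rfl⟩ | ⟨a, b, c, habc, rfl⟩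
  · obtain ⟨u, hus, rfl⟩ := mem_image.1 hx
    obtain ⟨v, hvs, rfl⟩ := mem_image.1 hy
    intro z hz
    obtain ⟨w, hws, rfl⟩ := mem_image.1 hz
    rw [dp0_mem_doubleSet] at hxW hyW ⊢
    exact hW.mem hs hus hvs (fun h => hxy (congrArg _ h)) hxW hyW hws
  · have ha : a ∈ W := by
      simp only [mem_insert, mem_singleton] at hx hy
      rcases hx with rfl | rfl | rfl <;> rcases hy with rfl | rfl | rfl <;> simp_all
    simp [insert_subset_iff, ha]
  · obtain ⟨hab, hac, hbc⟩ := ne_of_triple_card (hT _ habc)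
    have key : ∀ u ∈ ({a, b, c} : Finset β), ∀ v ∈ ({a, b, c} : Finset β), u ≠ v → u ∈ W →
        v ∈ W → a ∈ W ∧ b ∈ W ∧ c ∈ W := fun u hu v hv huv huW hvW =>
      ⟨hW.mem habc hu hv huv huW hvW (by simp), hW.mem habc hu hv huv huW hvW (by simp),
        hW.mem habc hu hv huv huW hvW (by simp)⟩
    have hall : a ∈ W ∧ b ∈ W ∧ c ∈ W := by
      simp only [mem_insert, mem_singleton] at hx hy
      rcases hx with rfl | rfl | rfl <;> rcases hy with rfl | rfl | rfl <;>
        simp only [dp0_mem_doubleSet, dp1_mem_doubleSet, ne_eq, not_true_eq_false] at hxW hyW hxy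
      · exact key a (by simp) b (by simp) hab hxW hyW
      · exact key a (by simp) c (by simp) hac hxW hyW
      · exact key a (by simp) b (by simp) hab hyW hxW
      · exact key b (by simp) c (by simp) hbc hxW hyW
      · exact key a (by simp) c (by simp) hac hyW hxW
      · exact key b (by simp) c (by simp) hbc hyW hxW
    simp [insert_subset_iff, hall]

theorem dp0_mem_iff_dp1_mem {W : Finset (β ⊕ β ⊕ Unit)} (hW : IsSub (DoubleTriples T) W)
    (hs : dpStar ∈ W) (a : β) : dp0 a ∈ W ↔ dp1 a ∈ W := by
  have ht : ({dpStar, dp0 a, dp1 a} : Finset (β ⊕ β ⊕ Unit)) ∈ DoubleTriples T :=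
    mem_doubleTriples.2 (Or.inr (Or.inl ⟨a, rfl⟩))
  constructor <;> intro h
  · exact hW.mem ht (x := dpStar) (y := dp0 a) (by simp) (by simp) (by simp [dpStar, dp0]) hs h
      (by simp)
  · exact hW.mem ht (x := dpStar) (y := dp1 a) (by simp) (by simp) (by simp [dpStar, dp1]) hs h
      (by simp)

theorem exists_mem_doubleTriples (hT3 : ∀ t ∈ T, t.card = 3)
    (hT : ∀ p q : β, p ≠ q → ∃ t ∈ T, p ∈ t ∧ q ∈ t) (x y : β ⊕ β ⊕ Unit) (hxy : x ≠ y) :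
    ∃ t ∈ DoubleTriples T, x ∈ t ∧ y ∈ t := by
  have hstar : ∀ a : β, ({dpStar, dp0 a, dp1 a} : Finset (β ⊕ β ⊕ Unit)) ∈ DoubleTriples T :=
    fun a => mem_doubleTriples.2 (Or.inr (Or.inl ⟨a, rfl⟩))
  have hmix : ∀ a b : β, a ≠ b → ∃ c : β,
      ({dp1 a, dp1 b, dp0 c} : Finset (β ⊕ β ⊕ Unit)) ∈ DoubleTriples T ∧
      ({dp1 a, dp1 c, dp0 b} : Finset (β ⊕ β ⊕ Unit)) ∈ DoubleTriples T := by
    intro a b hab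
    obtain ⟨t, ht, ha, hb⟩ := hT a b hab
    obtain ⟨c, -, -, rfl⟩ := exists_eq_triple_of_mem (hT3 t ht) ha hb hab
    exact ⟨c, mem_doubleTriples.2 (Or.inr (Or.inr ⟨a, b, c, ht, rfl⟩)),
      mem_doubleTriples.2 (Or.inr (Or.inr ⟨a, c, b, pair_comm b c ▸ ht, rfl⟩))⟩
  have h01 : ∀ a b : β, ∃ t ∈ DoubleTriples T, dp0 a ∈ t ∧ dp1 b ∈ t := by
    intro a b
    by_cases hab : b = a
    · exact ⟨_, hstar a, by simp [hab]⟩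
    · obtain ⟨c, -, hc⟩ := hmix b a hab
      exact ⟨_, hc, by simp⟩
  rcases x with a | a | ⟨⟩ <;> rcases y with b | b | ⟨⟩
  · obtain ⟨t, ht, ha, hb⟩ := hT a b fun h => hxy (by rw [h])
    exact ⟨t.image dp0, mem_doubleTriples.2 (Or.inl ⟨t, ht, rfl⟩), mem_image_of_mem dp0 ha,
      mem_image_of_mem dp0 hb⟩
  · exact h01 a b
  · exact ⟨_, hstar a, by simp [dp0, dpStar]⟩
  · obtain ⟨t, ht, h⟩ := h01 b a
    exact ⟨t, ht, h.symm⟩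
  · obtain ⟨c, hc, -⟩ := hmix a b fun h => hxy (by rw [h])
    exact ⟨_, hc, by simp [dp1]⟩
  · exact ⟨_, hstar a, by simp [dp1, dpStar]⟩
  · exact ⟨_, hstar b, by simp [dp0, dpStar]⟩
  · exact ⟨_, hstar b, by simp [dp1, dpStar]⟩
  · exact absurd rfl hxy

theorem IsCopy.doubleMap [Fintype α] {φ : α → β} (h : IsCopy S T φ) :
    IsCopy (DoubleTriples S) (DoubleTriples T) (doubleMap φ) := by
  refine ⟨Sum.map_injective.2 ⟨h.1, Sum.map_injective.2 ⟨h.1, Function.injective_id⟩⟩,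
    fun s hs => ?_, fun t ht htW => ?_⟩
  · rw [mem_doubleTriples] at hs ⊢
    rcases hs with ⟨r, hr, rfl⟩ | ⟨a, rfl⟩ | ⟨a, b, c, habc, rfl⟩
    · refine Or.inl ⟨r.image φ, h.2.1 r hr, ?_⟩
      ext x
      simp [_root_.doubleMap, dp0]
    · refine Or.inr (Or.inl ⟨φ a, ?_⟩)
      ext x
      simp [_root_.doubleMap, dp0, dp1, dpStar]
    · refine Or.inr (Or.inr ⟨φ a, φ b, φ c, by simpa using h.2.1 _ habc, ?_⟩)
      ext x
      simp [_root_.doubleMap, dp0, dp1]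
  · rw [image_doubleMap] at htW
    rcases mem_doubleTriples.1 ht with ⟨s, hs, rfl⟩ | ⟨a, rfl⟩ | ⟨a, b, c, habc, rfl⟩
    · obtain ⟨r, hr, rfl⟩ := h.2.2 s hs fun a ha =>
        dp0_mem_doubleSet.1 (htW (mem_image_of_mem dp0 ha))
      refine ⟨r.image dp0, mem_doubleTriples.2 (Or.inl ⟨r, hr, rfl⟩), ?_⟩
      ext x
      simp [_root_.doubleMap, dp0]
    · have ha : a ∈ univ.image φ := dp0_mem_doubleSet.1 (htW (by simp))
      obtain ⟨u, -, rfl⟩ := mem_image.1 ha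
      refine ⟨{dpStar, dp0 u, dp1 u}, mem_doubleTriples.2 (Or.inr (Or.inl ⟨u, rfl⟩)), ?_⟩
      ext x
      simp [_root_.doubleMap, dp0, dp1, dpStar]
    · have ha : a ∈ univ.image φ := dp1_mem_doubleSet.1 (htW (by simp))
      have hb : b ∈ univ.image φ := dp1_mem_doubleSet.1 (htW (by simp))
      have hc : c ∈ univ.image φ := dp0_mem_doubleSet.1 (htW (by simp))
      obtain ⟨r, hr, hrs⟩ := h.2.2 _ habc
        (insert_subset ha (insert_subset hb (singleton_subset_iff.2 hc)))
      obtain ⟨u, -, rfl⟩ := mem_image.1 ha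
      obtain ⟨v, -, rfl⟩ := mem_image.1 hb
      obtain ⟨w, -, rfl⟩ := mem_image.1 hc
      have hr' : r = {u, v, w} := by
        apply image_injective h.1
        rw [← hrs]
        simp
      refine ⟨{dp1 u, dp1 v, dp0 w},
        mem_doubleTriples.2 (Or.inr (Or.inr ⟨u, v, w, hr' ▸ hr, rfl⟩)), ?_⟩
      ext x
      simp [_root_.doubleMap, dp0, dp1]

end Double

section Projective

theorem mem_PGTriples {n : ℕ} {t : Finset (PGPoint n)} :
    t ∈ PGTriples n ↔ t.card = 3 ∧ ∑ v ∈ t, (v : Fin (n + 1) → ZMod 2) = 0 := by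
  simp [PGTriples]

theorem triple_mem_PGTriples {n : ℕ} {a b c : PGPoint n} (hab : a ≠ b) (hac : a ≠ c)
    (hbc : b ≠ c) : ({a, b, c} : Finset (PGPoint n)) ∈ PGTriples n ↔ a.1 + b.1 + c.1 = 0 := by
  rw [mem_PGTriples, sum_insert (by simp [hab, hac]), sum_pair hbc, add_assoc]
  exact and_iff_right (card_eq_three.2 ⟨a, b, c, hab, hac, hbc, rfl⟩)

theorem isSTS_PGTriples (n : ℕ) : IsSTS (PGTriples n) := by
  have hchar : ∀ u : Fin (n + 1) → ZMod 2, u + u = 0 := fun u =>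
    funext fun i => CharTwo.add_self_eq_zero (u i)
  refine ⟨fun t ht => (mem_PGTriples.1 ht).1, fun p q hpq => ?_⟩
  have hcancel : ∀ u v w : Fin (n + 1) → ZMod 2, u + v + w = 0 → w = u + v := fun u v w h => by
    calc w = (u + v) + (u + v) + w := by rw [hchar, zero_add]
      _ = u + v := by rw [add_assoc, h, add_zero]
  have hne : p.1 + q.1 ≠ 0 := fun h => hpq (Subtype.ext (by
    simpa using (hcancel 0 p.1 q.1 (by rw [zero_add, h])).symm))
  have hp : p ≠ ⟨p.1 + q.1, hne⟩ := fun h => q.2 (by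
    simpa using congrArg Subtype.val h)
  have hq : q ≠ ⟨p.1 + q.1, hne⟩ := fun h => p.2 (by
    simpa using congrArg Subtype.val h)
  refine ⟨{p, q, ⟨p.1 + q.1, hne⟩}, ⟨(triple_mem_PGTriples hpq hp hq).2 (hchar _), by simp,
    by simp⟩, ?_⟩
  rintro t ⟨ht, hpt, hqt⟩
  obtain ⟨c, hcp, hcq, h⟩ := exists_eq_triple_of_mem (mem_PGTriples.1 ht).1 hpt hqt hpq
  have ht' := (triple_mem_PGTriples hpq hcp.symm hcq.symm).1 (h ▸ ht)
  rw [h, show c = ⟨p.1 + q.1, hne⟩ from Subtype.ext (hcancel _ _ _ ht')]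

theorem IsSTS.isPSTS {α : Type*} {T : Finset (Finset α)} (hT : IsSTS T) : IsPSTS T :=
  ⟨hT.1, fun p q hpq _ h₁ _ h₂ hp₁ hq₁ hp₂ hq₂ =>
    (hT.2 p q hpq).unique ⟨h₁, hp₁, hq₁⟩ ⟨h₂, hp₂, hq₂⟩⟩

/-- The identification of the points of `2 PG(n,2) + 1` with those of `PG(n+1,2)`. -/
def doublePG (n : ℕ) : PGPoint n ⊕ PGPoint n ⊕ Unit → PGPoint (n + 1)
  | Sum.inl v => ⟨Fin.cons 0 v.1, fun h => v.2 (funext fun i => by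
      simpa using congrFun h i.succ)⟩
  | Sum.inr (Sum.inl v) => ⟨Fin.cons 1 v.1, fun h => by simpa using congrFun h 0⟩
  | Sum.inr (Sum.inr _) => ⟨Fin.cons 1 0, fun h => by simpa using congrFun h 0⟩

theorem doublePG_bijective (n : ℕ) : Function.Bijective (doublePG n) := by
  constructor
  · intro x y h
    have h' := congrArg Subtype.val h
    rcases x with u | u | ⟨⟩ <;> rcases y with v | v | ⟨⟩ <;>
      simp only [doublePG, Fin.cons_inj] at h'
    · rw [Subtype.ext h'.2]
    · exact absurd h'.1 (by decide)
    · exact absurd h'.1 (by decide)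
    · exact absurd h'.1 (by decide)
    · rw [Subtype.ext h'.2]
    · exact absurd h'.2 u.2
    · exact absurd h'.1 (by decide)
    · exact absurd h'.2.symm v.2
    · rfl
  · rintro ⟨x, hx⟩
    have h2 : ∀ c : ZMod 2, c = 0 ∨ c = 1 := by decide
    by_cases ht : Fin.tail x = 0 <;> rcases h2 (x 0) with h0 | h0
    · exact absurd (funext (Fin.cases h0 (congrFun ht))) hx
    · exact ⟨Sum.inr (Sum.inr ()), Subtype.ext (funext
        (Fin.cases h0.symm fun i => (congrFun ht i).symm))⟩
    · exact ⟨Sum.inl ⟨Fin.tail x, ht⟩, Subtype.ext (funext (Fin.cases h0.symm fun _ => rfl))⟩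
    · exact ⟨Sum.inr (Sum.inl ⟨Fin.tail x, ht⟩), Subtype.ext (funext
        (Fin.cases h0.symm fun _ => rfl))⟩

theorem isCopy_doublePG (n : ℕ) :
    IsCopy (DoubleTriples (PGTriples n)) (PGTriples (n + 1)) (doublePG n) := by
  have hS := isSTS_PGTriples n
  have hinj := (doublePG_bijective n).1
  refine isCopy_of_isPSTS (exists_mem_doubleTriples hS.1 fun p q hpq => (hS.2 p q hpq).exists)
    (isSTS_PGTriples (n + 1)).isPSTS hinj fun s hs => ?_
  have key : ∀ x y z : PGPoint n ⊕ PGPoint n ⊕ Unit, x ≠ y → x ≠ z → y ≠ z →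
      (∀ w, w ∈ s ↔ w = x ∨ w = y ∨ w = z) →
      (doublePG n x).1 + (doublePG n y).1 + (doublePG n z).1 = 0 →
      s.image (doublePG n) ∈ PGTriples (n + 1) := by
    intro x y z hxy hxz hyz hs h0
    rw [← triple_mem_PGTriples (hinj.ne hxy) (hinj.ne hxz) (hinj.ne hyz)] at h0
    convert h0 using 1
    ext w
    simp [hs, eq_comm]
  have hsum : ∀ a b c : PGPoint n, a ≠ b → a ≠ c → b ≠ c →
      ({a, b, c} : Finset (PGPoint n)) ∈ PGTriples n → ∀ i, a.1 i + b.1 i + c.1 i = 0 :=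
    fun a b c hab hac hbc h i => congrFun ((triple_mem_PGTriples hab hac hbc).1 h) i
  have h11 : (1 : ZMod 2) + 1 = 0 := by decide
  rcases mem_doubleTriples.1 hs with ⟨r, hr, hsr⟩ | ⟨a, hsr⟩ | ⟨a, b, c, habc, hsr⟩
  · obtain ⟨a, b, c, hab, hac, hbc, h⟩ := card_eq_three.1 (hS.1 r hr)
    refine key (dp0 a) (dp0 b) (dp0 c) (dp0_injective.ne hab) (dp0_injective.ne hac)
      (dp0_injective.ne hbc) (fun w => ?_) (funext (Fin.cases ?_ fun i => ?_))
    · simp [hsr, h]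
    · simp [doublePG, dp0]
    · simpa [doublePG, dp0] using hsum a b c hab hac hbc (h ▸ hr) i
  · refine key dpStar (dp0 a) (dp1 a) (by simp [dpStar, dp0]) (by simp [dpStar, dp1])
      (by simp [dp0, dp1]) (fun w => ?_) (funext (Fin.cases ?_ fun i => ?_))
    · simp [hsr]
    · simp [doublePG, dp0, dp1, dpStar, h11]
    · simpa [doublePG, dp0, dp1, dpStar] using CharTwo.add_self_eq_zero (a.1 i)
  · obtain ⟨hab, hac, hbc⟩ := ne_of_triple_card (hS.1 _ habc)
    refine key (dp1 a) (dp1 b) (dp0 c) (by simpa [dp1] using hab) (by simp [dp0, dp1])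
      (by simp [dp0, dp1]) (fun w => ?_) (funext (Fin.cases ?_ fun i => ?_))
    · simp [hsr]
    · simp [doublePG, dp0, dp1, h11]
    · simpa [doublePG, dp0, dp1] using hsum a b c hab hac hbc habc i

/-- Doubling a copy of `PG(n,2)` gives a copy of `PG(n+1,2)`. -/
theorem IsPGSub.double {β : Type*} [Fintype β] {n : ℕ} {T : Finset (Finset β)} {W : Finset β}
    (h : IsPGSub n T W) : IsPGSub (n + 1) (DoubleTriples T) (doubleSet W) := by
  obtain ⟨φ, hφ, rfl⟩ := h
  let e := Equiv.ofBijective _ (doublePG_bijective n)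
  have he : IsCopy (DoubleTriples (PGTriples n)) (PGTriples (n + 1)) e := isCopy_doublePG n
  refine ⟨doubleMap φ ∘ e.symm, hφ.doubleMap.comp he.symm, ?_⟩
  rw [← image_doubleMap, ← image_image]
  congr 1
  simp [image_univ_equiv]

theorem isPGSub_singleton {β : Type*} [Fintype β] {T : Finset (Finset β)}
    (hT : ∀ t ∈ T, t.card = 3) (a : β) : IsPGSub 0 T {a} := by
  have hsub : ∀ x y : PGPoint 0, x = y := fun x y =>
    Subtype.ext ((by decide : ∀ x y : Fin 1 → ZMod 2, x ≠ 0 → y ≠ 0 → x = y) x.1 y.1 x.2 y.2)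
  refine ⟨fun _ => a, ⟨fun x y _ => hsub x y, fun s hs => ?_, fun t ht hta => ?_⟩, ?_⟩
  · obtain ⟨x, y, -, hxy, -⟩ := card_eq_three.1 (mem_PGTriples.1 hs).1
    exact absurd (hsub x y) hxy
  · have h1 := card_le_card (hta.trans (image_subset_iff.2 fun _ _ => mem_singleton_self a))
    rw [hT t ht, card_singleton] at h1
    omega
  · ext x
    simp only [mem_image, mem_univ, true_and, mem_singleton, eq_comm, exists_const_iff]
    exact and_iff_right ⟨⟨fun _ => 1, by decide⟩⟩

theorem isPGSub_triple {β : Type*} [Fintype β] {T : Finset (Finset β)} (hT : ∀ t ∈ T, t.card = 3)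
    {t : Finset β} (ht : t ∈ T) : IsPGSub 1 T t := by
  have hcard : (univ : Finset (PGPoint 1)).card = 3 := by decide
  have huniv : univ ∈ PGTriples 1 := mem_PGTriples.2 ⟨hcard, by decide⟩
  let e : PGPoint 1 ≃ t := Fintype.equivOfCardEq (by
    rw [← card_univ, hcard, Fintype.card_coe, hT t ht])
  have himage : univ.image (fun x => (e x : β)) = t := by
    ext x
    simp only [mem_image, mem_univ, true_and]
    exact ⟨fun ⟨y, hy⟩ => hy ▸ (e y).2, fun hx => ⟨e.symm ⟨x, hx⟩, by simp⟩⟩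
  refine ⟨fun x => e x, ⟨Subtype.val_injective.comp e.injective, fun s hs => ?_,
    fun r hr hrt => ⟨univ, huniv, ?_⟩⟩, himage⟩
  · have : s = univ := eq_univ_of_card s (by
      rw [(mem_PGTriples.1 hs).1, ← card_univ, hcard])
    rw [this, himage]
    exact ht
  · rw [himage] at hrt ⊢
    exact eq_of_subset_of_card_le hrt (by rw [hT t ht, hT r hr])

end Projective

section TwoPointed

variable {γ : Type*} {T : Finset (Finset γ)}

/-- `x` is one of the four points of `2(2Y+1)+1` lying over the point `a` of `Y`. -/
def LiesOver (x : (γ ⊕ γ ⊕ Unit) ⊕ (γ ⊕ γ ⊕ Unit) ⊕ Unit) (a : γ) : Prop :=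
  x = dp0 (dp0 a) ∨ x = dp0 (dp1 a) ∨ x = dp1 (dp0 a) ∨ x = dp1 (dp1 a)

theorem LiesOver.mem_doubleSet {x : (γ ⊕ γ ⊕ Unit) ⊕ (γ ⊕ γ ⊕ Unit) ⊕ Unit} {a : γ}
    (h : LiesOver x a) {B : Finset γ} : x ∈ doubleSet (doubleSet B) ↔ a ∈ B := by
  rcases h with rfl | rfl | rfl | rfl <;> simp

theorem exists_liesOver {x : (γ ⊕ γ ⊕ Unit) ⊕ (γ ⊕ γ ⊕ Unit) ⊕ Unit} (hp : x ≠ dpStar)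
    (hq : x ≠ dp0 dpStar) : x = dp1 dpStar ∨ ∃ a, LiesOver x a := by
  rcases x with (a | a | ⟨⟩) | (a | a | ⟨⟩) | ⟨⟩
  · exact Or.inr ⟨a, Or.inl rfl⟩
  · exact Or.inr ⟨a, Or.inr (Or.inl rfl)⟩
  · exact absurd rfl hq
  · exact Or.inr ⟨a, Or.inr (Or.inr (Or.inl rfl))⟩
  · exact Or.inr ⟨a, Or.inr (Or.inr (Or.inr rfl))⟩
  · exact Or.inl rfl
  · exact absurd rfl hp

variable [Fintype γ]

theorem LiesOver.mem_iff {x : (γ ⊕ γ ⊕ Unit) ⊕ (γ ⊕ γ ⊕ Unit) ⊕ Unit} {a : γ}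
    (h : LiesOver x a) {W : Finset ((γ ⊕ γ ⊕ Unit) ⊕ (γ ⊕ γ ⊕ Unit) ⊕ Unit)}
    (hW : IsSub (DoubleTriples (DoubleTriples T)) W) (hp : dpStar ∈ W) (hq : dp0 dpStar ∈ W) :
    x ∈ W ↔ dp0 (dp0 a) ∈ W := by
  have h0 := dp0_mem_iff_dp1_mem hW hp
  have ht : ({dpStar, dp0 a, dp1 a} : Finset (γ ⊕ γ ⊕ Unit)).image dp0 ∈
      DoubleTriples (DoubleTriples T) :=
    (isCopy_dp0 _).2.1 _ (mem_doubleTriples.2 (Or.inr (Or.inl ⟨a, rfl⟩)))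
  have h1 : dp0 (dp0 a) ∈ W ↔ dp0 (dp1 a) ∈ W := by
    constructor <;> intro h
    · exact hW.mem ht (x := dp0 dpStar) (y := dp0 (dp0 a)) (by simp) (by simp)
        (by simp [dpStar, dp0]) hq h (by simp)
    · exact hW.mem ht (x := dp0 dpStar) (y := dp0 (dp1 a)) (by simp) (by simp)
        (by simp [dpStar, dp0, dp1]) hq h (by simp)
  rcases h with rfl | rfl | rfl | rfl
  · rfl
  · exact h1.symm
  · exact (h0 _).symm
  · exact (h0 _).symm.trans h1.symm

theorem generatedSub_eq_doubleSet (hT : ∀ t ∈ T, t.card = 3)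
    {s : Finset ((γ ⊕ γ ⊕ Unit) ⊕ (γ ⊕ γ ⊕ Unit) ⊕ Unit)} (hp : dpStar ∈ s)
    (hq : dp0 dpStar ∈ s) {B : Finset γ} (hB : IsSub T B)
    (hs : ∀ x ∈ s, x ≠ dpStar → x ≠ dp0 dpStar → x ∈ doubleSet (doubleSet B))
    (h : ∀ W, IsSub (DoubleTriples (DoubleTriples T)) W → s ⊆ W → ∀ a ∈ B, dp0 (dp0 a) ∈ W) :
    GeneratedSub (DoubleTriples (DoubleTriples T)) s = doubleSet (doubleSet B) := by
  have hT' : ∀ t ∈ DoubleTriples T, t.card = 3 := by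
    intro t ht
    rcases mem_doubleTriples.1 ht with ⟨r, hr, rfl⟩ | ⟨a, rfl⟩ | ⟨a, b, c, habc, rfl⟩
    · rw [card_image_of_injective _ dp0_injective, hT r hr]
    · exact card_eq_three.2 ⟨dpStar, dp0 a, dp1 a, by simp [dpStar, dp0], by simp [dpStar, dp1],
        by simp [dp0, dp1], rfl⟩
    · obtain ⟨hab, -, -⟩ := ne_of_triple_card (hT _ habc)
      exact card_eq_three.2 ⟨dp1 a, dp1 b, dp0 c, by simpa [dp1] using hab, by simp [dp0, dp1],
        by simp [dp0, dp1], rfl⟩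
  ext x
  simp only [GeneratedSub, mem_filter, mem_univ, true_and]
  constructor
  · intro hx
    refine hx _ ((hB.doubleSet hT).doubleSet hT') fun y hy => ?_
    by_cases hyp : y = dpStar
    · simp [hyp]
    by_cases hyq : y = dp0 dpStar
    · simp [hyq]
    exact hs y hy hyp hyq
  · intro hx W hW hsW
    by_cases hxp : x = dpStar
    · exact hxp ▸ hsW hp
    by_cases hxq : x = dp0 dpStar
    · exact hxq ▸ hsW hq
    rcases exists_liesOver hxp hxq with rfl | ⟨a, ha⟩
    · exact (dp0_mem_iff_dp1_mem hW (hsW hp) _).1 (hsW hq)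
    · rw [ha.mem_iff hW (hsW hp) (hsW hq)]
      exact h W hW hsW a (ha.mem_doubleSet.1 hx)

/-- The system `2(2Y+1)+1` is `PG(3,2)`-2-pointed with respect to its two extra points. -/
theorem IsSTS.PG32TwoPointed_double_double (hT : IsSTS T) :
    PG32TwoPointed (DoubleTriples (DoubleTriples T)) dpStar (dp0 dpStar) := by
  have hpq : (dpStar : (γ ⊕ γ ⊕ Unit) ⊕ (γ ⊕ γ ⊕ Unit) ⊕ Unit) ≠ dp0 dpStar := by
    simp [dpStar, dp0]
  refine ⟨hpq, fun s hs4 hp hq => ?_⟩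
  have hq' : dp0 dpStar ∈ s.erase dpStar := mem_erase.2 ⟨hpq.symm, hq⟩
  have h2 : ((s.erase dpStar).erase (dp0 dpStar)).card = 2 := by
    rw [card_erase_of_mem hq', card_erase_of_mem hp, hs4]
  obtain ⟨x, y, hxy, hs⟩ := card_eq_two.1 h2
  have hmem : ∀ z, (z ≠ dp0 dpStar ∧ z ≠ dpStar ∧ z ∈ s) ↔ z = x ∨ z = y := by
    intro z
    simpa using congrArg (z ∈ ·) hs
  obtain ⟨hxq, hxp, hxs⟩ := (hmem x).2 (Or.inl rfl)
  obtain ⟨hyq, hyp, hys⟩ := (hmem y).2 (Or.inr rfl)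
  have plane : ∀ a z, z ∈ s → LiesOver z a → x ∈ doubleSet (doubleSet {a}) →
      y ∈ doubleSet (doubleSet {a}) →
      IsPGSub 2 (DoubleTriples (DoubleTriples T))
        (GeneratedSub (DoubleTriples (DoubleTriples T)) s) := by
    intro a z hz hza hx hy
    rw [generatedSub_eq_doubleSet hT.1 hp hq (isSub_singleton T a)
      (fun w hw hwp hwq => by rcases (hmem w).1 ⟨hwq, hwp, hw⟩ with rfl | rfl <;> assumption)
      fun W hW hsW b hb => by
        rw [mem_singleton.1 hb]
        exact (hza.mem_iff hW (hsW hp) (hsW hq)).1 (hsW hz)]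
    exact (isPGSub_singleton hT.1 a).double.double
  rcases exists_liesOver hxp hxq with rfl | ⟨a, ha⟩ <;>
    rcases exists_liesOver hyp hyq with rfl | ⟨b, hb⟩
  · exact absurd rfl hxy
  · exact Or.inl (plane b y hys hb (by simp) (by simp [hb.mem_doubleSet]))
  · exact Or.inl (plane a x hxs ha (by simp [ha.mem_doubleSet]) (by simp))
  · by_cases hab : a = b
    · subst hab
      exact Or.inl (plane a x hxs ha (by simp [ha.mem_doubleSet]) (by simp [hb.mem_doubleSet]))
    · obtain ⟨t, ⟨ht, hat, hbt⟩, -⟩ := hT.2 a b hab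
      right
      rw [generatedSub_eq_doubleSet hT.1 hp hq (hT.isSub_triple ht)
        (fun w hw hwp hwq => by
          rcases (hmem w).1 ⟨hwq, hwp, hw⟩ with rfl | rfl
          · exact ha.mem_doubleSet.2 hat
          · exact hb.mem_doubleSet.2 hbt)
        fun W hW hsW c hc => hW.mem
          ((isCopy_dp0 _).2.1 _ ((isCopy_dp0 T).2.1 t ht))
          (mem_image_of_mem dp0 (mem_image_of_mem dp0 hat))
          (mem_image_of_mem dp0 (mem_image_of_mem dp0 hbt))
          ((dp0_injective.comp dp0_injective).ne hab)
          ((ha.mem_iff hW (hsW hp) (hsW hq)).1 (hsW hxs))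
          ((hb.mem_iff hW (hsW hp) (hsW hq)).1 (hsW hys))
          (mem_image_of_mem dp0 (mem_image_of_mem dp0 hc))]
      exact (isPGSub_triple hT.1 ht).double.double

end TwoPointed

end

/-- **Lemma 2.2(ii).** Every Steiner triple system `Y₁` with at least 3 points is a
subsystem of the Steiner triple system `Z = 2(2Y₁+1)+1` on `4|Y₁|+3` points, which is
`PG(3,2)`-2-pointed with respect to some pair of points; moreover
`4|Y₁|+3 ≡ 7 (mod 8)`. -/
theorem stmt5 {γ : Type*} [Fintype γ] (T : Finset (Finset γ)) (hT : IsSTS T)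
    (h3 : 3 ≤ Fintype.card γ) :
    (IsCopy T (DoubleTriples (DoubleTriples T)) fun a => dp0 (dp0 a)) ∧
    IsSub (DoubleTriples (DoubleTriples T))
      (Finset.univ.image fun a : γ => dp0 (dp0 a)) ∧
    (∃ p q : (γ ⊕ γ ⊕ Unit) ⊕ (γ ⊕ γ ⊕ Unit) ⊕ Unit,
      PG32TwoPointed (DoubleTriples (DoubleTriples T)) p q) ∧
    Fintype.card ((γ ⊕ γ ⊕ Unit) ⊕ (γ ⊕ γ ⊕ Unit) ⊕ Unit) = 4 * Fintype.card γ + 3 ∧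
    (4 * Fintype.card γ + 3) % 8 = 7 := by
  refine ⟨(isCopy_dp0 _).comp (isCopy_dp0 T), ?_,
    ⟨dpStar, dp0 dpStar, hT.PG32TwoPointed_double_double⟩, ?_, ?_⟩
  · have hu : IsSub T univ := fun t _ _ => subset_univ t
    convert hu.image_dp0.image_dp0 using 1
    ext x
    simp
  · simp only [Fintype.card_sum, Fintype.card_unit]
    ring
  · obtain ⟨p⟩ : Nonempty γ := Fintype.card_pos_iff.1 (by omega)
    obtain ⟨k, hk⟩ := hT.odd_card p
    omega

end
end

section
/- Let n ≥ 1 and let S be a Steiner triple system with |S| < 2^n − 1. If f is a map from the points of PG(n−1,2) to the points of S such that for every line {p,q,r} of PG(n−1,2) the image set {f(p),f(q),f(r)} is either a single point of S or a triple of S, then f is constant (its image has size 1). -/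
open Finset

noncomputable section
open scoped Classical

/-- A map sending lines to points or triples is either constant on a line, or injective on it
with image a triple. -/
lemma line_const_or_triple {α : Type*} {m : ℕ} {TS : Finset (Finset α)}
    (hcard : ∀ t ∈ TS, t.card = 3) {f : PGPoint m → α}
    (hf : ∀ t ∈ PGTriples m, (t.image f).card = 1 ∨ t.image f ∈ TS)
    {p q r : PGPoint m} (hpq : p ≠ q) (hr : r.1 = p.1 + q.1) :
    (f p = f q ∧ f p = f r) ∨
      (({f p, f q, f r} : Finset α) ∈ TS ∧ f p ≠ f q ∧ f p ≠ f r ∧ f q ≠ f r) := by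
  have hpr : p ≠ r := by
    rintro rfl
    exact q.2 (left_eq_add.mp hr)
  have hqr : q ≠ r := by
    rintro rfl
    exact p.2 (right_eq_add.mp hr)
  have hline : ({p, q, r} : Finset (PGPoint m)) ∈ PGTriples m := by
    refine Finset.mem_filter.mpr ⟨Finset.mem_univ _, Finset.card_triple_eq_three_iff.mpr
      ⟨hpq, hpr, hqr⟩, ?_⟩
    rw [Finset.sum_insert (by simp [hpq, hpr]), Finset.sum_pair hqr, hr, ← add_assoc]
    exact CharTwo.add_self_eq_zero _
  have himage : ({p, q, r} : Finset (PGPoint m)).image f = {f p, f q, f r} := by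
    simp [Finset.image_insert]
  have h := hf _ hline
  rw [himage] at h
  rcases h with h | h
  · left
    obtain ⟨a, ha⟩ := Finset.card_eq_one.mp h
    have hmem : ∀ x ∈ ({f p, f q, f r} : Finset α), x = a := by simp [ha]
    rw [hmem (f p) (by simp), hmem (f q) (by simp), hmem (f r) (by simp)]
    exact ⟨rfl, rfl⟩
  · exact Or.inr ⟨h, Finset.card_triple_eq_three_iff.mp (hcard _ h)⟩

/-- A map from `PG(m,2)` to a Steiner triple system sending lines to points or triples is
constant as soon as it identifies two distinct points. -/
lemma eq_of_not_injective_of_lines {α : Type*} {m : ℕ} {TS : Finset (Finset α)} (hS : IsSTS TS)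
    {f : PGPoint m → α} (hf : ∀ t ∈ PGTriples m, (t.image f).card = 1 ∨ t.image f ∈ TS)
    {p q : PGPoint m} (hpq : p ≠ q) (hfpq : f p = f q) (y : PGPoint m) : f y = f p := by
  by_contra hy
  have add_ne_zero : ∀ {u v : PGPoint m}, u ≠ v → u.1 + v.1 ≠ 0 := fun huv h =>
    huv (Subtype.ext (CharTwo.add_eq_zero.mp h))
  have hpy : p ≠ y := by rintro rfl; exact hy rfl
  have hqy : q ≠ y := by rintro rfl; exact hy hfpq.symm
  let r : PGPoint m := ⟨p.1 + q.1, add_ne_zero hpq⟩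
  let u : PGPoint m := ⟨p.1 + y.1, add_ne_zero hpy⟩
  let v : PGPoint m := ⟨q.1 + y.1, add_ne_zero hqy⟩
  have huv : u ≠ v := fun h =>
    hpq (Subtype.ext (add_right_cancel (congrArg Subtype.val h)))
  have hruv : r.1 = u.1 + v.1 := by
    change p.1 + q.1 = (p.1 + y.1) + (q.1 + y.1)
    rw [add_add_add_comm, CharTwo.add_self_eq_zero, add_zero]
  have hfr : f p = f r := by
    rcases line_const_or_triple hS.1 hf hpq (r := r) rfl with h | h
    · exact h.2
    · exact absurd hfpq h.2.1
  rcases line_const_or_triple hS.1 hf hpy (r := u) rfl with hu | ⟨hu, -, hpu, hyu⟩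
  · exact hy hu.1.symm
  rcases line_const_or_triple hS.1 hf hqy (r := v) rfl with hv | ⟨hv, -, -, -⟩
  · exact hy (hfpq.trans hv.1).symm
  rw [← hfpq] at hv
  have htriple := (hS.2 (f p) (f y) (Ne.symm hy)).unique
    ⟨hu, by simp, by simp⟩ ⟨hv, by simp, by simp⟩
  have hmem : f u ∈ ({f p, f y, f v} : Finset α) := htriple ▸ by simp
  have hfuv : f u = f v := by
    simpa [hpu.symm, hyu.symm] using hmem
  rcases line_const_or_triple hS.1 hf huv hruv with h | h
  · exact hpu (hfr.trans h.2.symm)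
  · exact h.2.1 hfuv

/-- **Remark 2.4 (key claim).** Let `n ≥ 1` and let `S` be a Steiner triple system
with `|S| < 2^n − 1`.  Any map from `PG(n−1,2)` to `S` sending each line to a single
point or a triple of `S` is constant. -/
theorem stmt7 {α : Type*} [Fintype α] (n : ℕ) (hn : 1 ≤ n)
    (TS : Finset (Finset α)) (hS : IsSTS TS)
    (hcard : Fintype.card α < 2 ^ n - 1) (f : PGPoint (n - 1) → α)
    (hf : ∀ t ∈ PGTriples (n - 1), (t.image f).card = 1 ∨ t.image f ∈ TS) :
    ∀ p q : PGPoint (n - 1), f p = f q := by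
  have hpoints : Fintype.card (PGPoint (n - 1)) = 2 ^ n - 1 := by
    rw [Fintype.card_subtype_compl, Fintype.card_subtype_eq]
    simp [ZMod.card, Nat.sub_add_cancel hn]
  obtain ⟨p, q, hpq, hfpq⟩ :=
    Fintype.exists_ne_map_eq_of_card_lt f (hpoints ▸ hcard)
  intro x y
  rw [eq_of_not_injective_of_lines hS hf hpq hfpq x,
    eq_of_not_injective_of_lines hS hf hpq hfpq y]

end
end

section
/- In Moore's construction U = X ∪ (V × A), assume the cyclic group A has even order, Y is PG(2,2)-paired, and |Y| − |X| > 6|V|. Then every subsystem W of U isomorphic to Y equals Y_v for some v ∈ V. -/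
open Finset

noncomputable section
open scoped Classical

/-- Three pairwise distinct points forming a triple of `T`. -/
def Collinear3 {β : Type*} (T : Finset (Finset β)) (p q r : β) : Prop :=
  p ≠ q ∧ p ≠ r ∧ q ≠ r ∧ ∃ l ∈ T, ∀ x, x ∈ l ↔ x = p ∨ x = q ∨ x = r

lemma Collinear3.swap {β : Type*} {T : Finset (Finset β)} {p q r : β}
    (h : Collinear3 T p q r) : Collinear3 T q p r := by
  obtain ⟨h₁, h₂, h₃, l, hl, h₄⟩ := h
  refine ⟨h₁.symm, h₃, h₂, l, hl, fun x => ?_⟩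
  rw [h₄]
  tauto

lemma Collinear3.rotate {β : Type*} {T : Finset (Finset β)} {p q r : β}
    (h : Collinear3 T p q r) : Collinear3 T q r p := by
  obtain ⟨h₁, h₂, h₃, l, hl, h₄⟩ := h
  refine ⟨h₃, h₁.symm, h₂.symm, l, hl, fun x => ?_⟩
  rw [h₄]
  tauto

lemma Collinear3.swap_right {β : Type*} {T : Finset (Finset β)} {p q r : β}
    (h : Collinear3 T p q r) : Collinear3 T p r q :=
  h.rotate.rotate.swap

/-- `f` maps lines of `T` to lines of `T'`. -/
def PreservesLines {β β' : Type*} (T : Finset (Finset β)) (T' : Finset (Finset β'))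
    (f : β → β') : Prop :=
  ∀ ⦃p q r⦄, Collinear3 T p q r → Collinear3 T' (f p) (f q) (f r)

lemma IsCopy.preservesLines {β β' : Type*} [Fintype β] {T : Finset (Finset β)}
    {T' : Finset (Finset β')} {f : β → β'} (hf : IsCopy T T' f) : PreservesLines T T' f := by
  rintro p q r ⟨h₁, h₂, h₃, l, hl, h₄⟩
  refine ⟨hf.1.ne h₁, hf.1.ne h₂, hf.1.ne h₃, l.image f, hf.2.1 l hl, fun x => ?_⟩
  simp only [Finset.mem_image, h₄]
  aesop

/-- In a Steiner triple system the third point on a line is unique. -/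
lemma IsSTS.third_unique {β : Type*} {T : Finset (Finset β)} (hT : IsSTS T) {p q r r' : β}
    (h : Collinear3 T p q r) (h' : Collinear3 T p q r') : r = r' := by
  obtain ⟨h₁, h₂, h₃, l, hl, h₄⟩ := h
  obtain ⟨-, -, -, l', hl', h₄'⟩ := h'
  have e := (hT.2 p q h₁).unique ⟨hl, by simp [h₄], by simp [h₄]⟩ ⟨hl', by simp [h₄'], by simp [h₄']⟩
  have : r ∈ l' := e ▸ (h₄ r).2 (by simp)
  rcases (h₄' r).1 this with h | h | h
  · exact absurd h.symm h₂
  · exact absurd h.symm h₃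
  · exact h

lemma IsSTS.collinear3 {β : Type*} {T : Finset (Finset β)} (hT : IsSTS T) {p q r : β}
    (h : ({p, q, r} : Finset β) ∈ T) : Collinear3 T p q r := by
  have hc := hT.1 _ h
  refine ⟨?_, ?_, ?_, _, h, by simp⟩
  · rintro rfl
    have := Finset.card_le_two (a := p) (b := r)
    simp_all
  · rintro rfl
    have := Finset.card_le_two (a := q) (b := p)
    rw [Finset.insert_comm] at hc
    simp_all
  · rintro rfl
    have := Finset.card_le_two (a := p) (b := q)
    simp_all

/-- A line of Moore's system through a point of `X` and a point over `v` has its third point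
over `v`. -/
lemma MooreTriples.third_of_inl {δ α γ A : Type*} [Fintype δ] [Fintype α] [Fintype A] [Group A]
    {TX : Finset (Finset δ)} {TV : Finset (Finset α)} {TY : Finset (Finset γ)}
    {j : δ → γ} {ℓ : A → γ} {x : δ} {v : α} {a : A} {r : δ ⊕ α × A}
    (h : Collinear3 (MooreTriples TX TV TY j ℓ) (Sum.inl x) (Sum.inr (v, a)) r) :
    ∃ b, r = Sum.inr (v, b) := by
  obtain ⟨-, h₂, -, l, h₄, hl⟩ := h
  simp only [MooreTriples, Finset.mem_filter, Finset.mem_univ, true_and] at h₄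
  have e₁ := (hl _).2 (.inl rfl)
  have e₂ := (hl _).2 (.inr (.inl rfl))
  have e₃ := (hl _).2 (.inr (.inr rfl))
  clear hl
  rcases h₄ with ⟨s, -, rfl⟩ | ⟨v', a₁, a₂, x', -, rfl⟩ | ⟨v', a₁, a₂, a₃, -, rfl⟩ |
    ⟨v₁, v₂, v₃, a₁, a₂, a₃, -, -, rfl⟩
  · simp at e₂
  · simp only [Finset.mem_insert, Finset.mem_singleton, Sum.inr.injEq, Sum.inl.injEq, reduceCtorEq,
      Prod.mk.injEq, or_false, false_or] at e₁ e₂ e₃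
    subst e₁
    have hv : v = v' := by tauto
    subst hv
    rcases e₃ with e₃ | e₃ | e₃
    · exact ⟨_, e₃⟩
    · exact ⟨_, e₃⟩
    · exact absurd e₃.symm h₂
  · simp at e₁
  · simp at e₁

/-- A line of Moore's system through points over different `v₁`, `v₂` is of the third kind. -/
lemma MooreTriples.third_of_ne {δ α γ A : Type*} [Fintype δ] [Fintype α] [Fintype A] [CommGroup A]
    {TX : Finset (Finset δ)} {TV : Finset (Finset α)} {TY : Finset (Finset γ)}
    {j : δ → γ} {ℓ : A → γ} (hV : IsSTS TV) {v₁ v₂ : α} {a₁ a₂ : A} {r : δ ⊕ α × A}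
    (hv : v₁ ≠ v₂)
    (h : Collinear3 (MooreTriples TX TV TY j ℓ) (Sum.inr (v₁, a₁)) (Sum.inr (v₂, a₂)) r) :
    ∃ v₃ a₃, r = Sum.inr (v₃, a₃) ∧ Collinear3 TV v₁ v₂ v₃ ∧ a₁ * a₂ * a₃ = 1 := by
  obtain ⟨-, h₂, h₃, l, h₄, hl⟩ := h
  simp only [MooreTriples, Finset.mem_filter, Finset.mem_univ, true_and] at h₄
  have e₁ := (hl _).2 (.inl rfl)
  have e₂ := (hl _).2 (.inr (.inl rfl))
  have e₃ := (hl _).2 (.inr (.inr rfl))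
  clear hl
  rcases h₄ with ⟨s, -, rfl⟩ | ⟨w, b₁, b₂, x', -, rfl⟩ | ⟨w, b₁, b₂, b₃, -, rfl⟩ |
    ⟨w₁, w₂, w₃, b₁, b₂, b₃, hw, hb, rfl⟩
  · simp at e₁
  · simp only [Finset.mem_insert, Finset.mem_singleton, Sum.inr.injEq, reduceCtorEq,
      Prod.mk.injEq, or_false] at e₁ e₂
    exact absurd ((by tauto : v₁ = w).trans (by tauto : w = v₂)) hv
  · simp only [Finset.mem_insert, Finset.mem_singleton, Sum.inr.injEq, Prod.mk.injEq] at e₁ e₂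
    exact absurd ((by tauto : v₁ = w).trans (by tauto : w = v₂)) hv
  · have hc := hV.collinear3 hw
    simp only [Finset.mem_insert, Finset.mem_singleton, Sum.inr.injEq, Prod.mk.injEq] at e₁ e₂ e₃
    have c₁ : b₁ * b₃ * b₂ = 1 := by rw [← hb]; ac_rfl
    have c₂ : b₂ * b₁ * b₃ = 1 := by rw [← hb]; ac_rfl
    have c₃ : b₂ * b₃ * b₁ = 1 := by rw [← hb]; ac_rfl
    have c₄ : b₃ * b₁ * b₂ = 1 := by rw [← hb]; ac_rfl
    have c₅ : b₃ * b₂ * b₁ = 1 := by rw [← hb]; ac_rfl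
    rcases e₁ with ⟨rfl, rfl⟩ | ⟨rfl, rfl⟩ | ⟨rfl, rfl⟩ <;>
    rcases e₂ with ⟨rfl, rfl⟩ | ⟨rfl, rfl⟩ | ⟨rfl, rfl⟩ <;>
    first
    | exact absurd rfl hv
    | (rcases e₃ with rfl | rfl | rfl <;>
        first
        | exact absurd rfl h₂
        | exact absurd rfl h₃
        | exact ⟨_, _, rfl, hc, hb⟩
        | exact ⟨_, _, rfl, hc.rotate.rotate.swap, c₁⟩
        | exact ⟨_, _, rfl, hc.swap, c₂⟩
        | exact ⟨_, _, rfl, hc.rotate, c₃⟩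
        | exact ⟨_, _, rfl, hc.rotate.rotate, c₄⟩
        | exact ⟨_, _, rfl, hc.rotate.swap, c₅⟩)

/-- Two distinct points of `PG(n,2)` are collinear with their sum. -/
lemma collinear3_PG {n : ℕ} {x y z : PGPoint n} (hxy : x ≠ y) (h : x.1 + y.1 = z.1) :
    Collinear3 (PGTriples n) x y z := by
  have hxz : x ≠ z := by
    rintro rfl
    exact y.2 (by simpa using h)
  have hyz : y ≠ z := by
    rintro rfl
    exact x.2 (by simpa using h)
  refine ⟨hxy, hxz, hyz, {x, y, z}, ?_, by simp⟩
  simp only [PGTriples, Finset.mem_filter, Finset.mem_univ, true_and]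
  refine ⟨Finset.card_eq_three.2 ⟨x, y, z, hxy, hxz, hyz, rfl⟩, ?_⟩
  rw [Finset.sum_insert (by simp [hxy, hxz]), Finset.sum_insert (by simp [hyz]),
    Finset.sum_singleton, ← add_assoc, h]
  exact CharTwo.add_self_eq_zero _

lemma exists_off_line :
    ∀ s t : Fin 3 → ZMod 2, ∃ w, w ≠ 0 ∧ w ≠ s ∧ w ≠ t ∧ w ≠ s + t := by
  decide

set_option maxRecDepth 100000 in
set_option synthInstance.maxSize 2000 in
set_option synthInstance.maxHeartbeats 200000 in
lemma span_three_points : ∀ s t r x : Fin 3 → ZMod 2,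
    s = 0 ∨ t = 0 ∨ t = s ∨ r = 0 ∨ r = s ∨ r = t ∨ r = s + t ∨ x = 0 ∨
    x = s ∨ x = t ∨ x = r ∨ x = s + t ∨ x = s + r ∨ x = t + r ∨ x = s + t + r := by
  decide +kernel

/-- `(s, t, st, w, sw, tw, stw)` are the points of a Fano plane in `T`. -/
structure IsFano {β : Type*} (T : Finset (Finset β)) (s t st w sw tw stw : β) : Prop where
  line_s_t : Collinear3 T s t st
  line_s_w : Collinear3 T s w sw
  line_t_w : Collinear3 T t w tw
  line_st_w : Collinear3 T st w stw
  line_s_tw : Collinear3 T s tw stw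
  line_t_sw : Collinear3 T t sw stw
  line_sw_tw : Collinear3 T sw tw st

lemma IsFano.map {β β' : Type*} {T : Finset (Finset β)} {T' : Finset (Finset β')} {f : β → β'}
    (hf : PreservesLines T T' f) {s t st w sw tw stw : β} (h : IsFano T s t st w sw tw stw) :
    IsFano T' (f s) (f t) (f st) (f w) (f sw) (f tw) (f stw) :=
  ⟨hf h.1, hf h.2, hf h.3, hf h.4, hf h.5, hf h.6, hf h.7⟩

lemma IsFano.swap {β : Type*} {T : Finset (Finset β)} {s t st w sw tw stw : β}
    (h : IsFano T s t st w sw tw stw) : IsFano T t s st w tw sw stw :=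
  ⟨h.1.swap, h.3, h.2, h.4, h.6, h.5, h.7.swap⟩

lemma IsFano.add_left {β : Type*} {T : Finset (Finset β)} {s t st w sw tw stw : β}
    (h : IsFano T s t st w sw tw stw) : IsFano T s t st sw w stw tw :=
  ⟨h.1, h.2.swap_right, h.6, h.7.rotate.rotate, h.5.swap_right, h.3, h.4.rotate⟩

lemma IsFano.add_right {β : Type*} {T : Finset (Finset β)} {s t st w sw tw stw : β}
    (h : IsFano T s t st w sw tw stw) : IsFano T s t st tw stw w sw :=
  h.swap.add_left.swap

/-- Three noncollinear points of `PG(2,2)` complete to a Fano plane that exhausts it. -/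
lemma exists_isFano_PG {s t w : PGPoint 2} (hst : s ≠ t) (hws : w ≠ s) (hwt : w ≠ t)
    (hw : w.1 ≠ s.1 + t.1) :
    ∃ st sw tw stw, IsFano (PGTriples 2) s t st w sw tw stw ∧
      ∀ x, x = s ∨ x = t ∨ x = st ∨ x = w ∨ x = sw ∨ x = tw ∨ x = stw := by
  have ne : ∀ {x y : Fin 3 → ZMod 2}, x ≠ y → x + y ≠ 0 := fun h e =>
    h (CharTwo.add_eq_zero.1 e)
  have hst' : s.1 ≠ t.1 := fun e => hst (Subtype.ext e)
  have hws' : w.1 ≠ s.1 := fun e => hws (Subtype.ext e)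
  have hwt' : w.1 ≠ t.1 := fun e => hwt (Subtype.ext e)
  have cancel : ∀ x y : Fin 3 → ZMod 2, x + (x + y) = y := fun x y => by
    rw [← add_assoc, CharTwo.add_self_eq_zero, zero_add]
  refine ⟨⟨_, ne hst'⟩, ⟨_, ne hws'.symm⟩, ⟨_, ne hwt'.symm⟩, ⟨_, ne hw.symm⟩, ⟨?_, ?_, ?_, ?_,
    ?_, ?_, ?_⟩, ?_⟩
  · exact collinear3_PG hst rfl
  · exact collinear3_PG hws.symm rfl
  · exact collinear3_PG hwt.symm rfl
  · exact collinear3_PG (fun e => hw (Subtype.ext_iff.1 e).symm) rfl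
  · refine collinear3_PG (fun e => hw ?_) (add_assoc _ _ _).symm
    have e' : s.1 = t.1 + w.1 := Subtype.ext_iff.1 e
    exact ((add_comm s.1 t.1).trans ((congrArg (t.1 + ·) e').trans (cancel t.1 w.1))).symm
  · refine collinear3_PG (fun e => hw ?_) (by change t.1 + (s.1 + w.1) = s.1 + t.1 + w.1; abel)
    have e' : t.1 = s.1 + w.1 := Subtype.ext_iff.1 e
    rw [e', cancel]
  · refine collinear3_PG (fun e => hst' (add_right_cancel (Subtype.ext_iff.1 e))) ?_
    change s.1 + w.1 + (t.1 + w.1) = s.1 + t.1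
    rw [add_comm t.1, add_assoc, cancel]
  · intro x
    simp only [Subtype.ext_iff]
    have := span_three_points s.1 t.1 w.1 x.1
    have h₁ := s.2
    have h₂ := t.2
    have h₃ := w.2
    have h₄ := x.2
    have h₅ := hst'.symm
    tauto

/-- In a Fano plane of Moore's system disjoint from `X`, if `s`, `t` lie over different points of
`V`, then a point off the line `st` lies over a point different from the one below `s`. -/
lemma IsFano.fst_ne {δ α γ A : Type*} [Fintype δ] [Fintype α] [Fintype A] [CommGroup A]
    {TX : Finset (Finset δ)} {TV : Finset (Finset α)} {TY : Finset (Finset γ)}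
    {j : δ → γ} {ℓ : A → γ} (hV : IsSTS TV) {s t w : α × A} {st sw tw stw : δ ⊕ α × A}
    (h : IsFano (MooreTriples TX TV TY j ℓ) (.inr s) (.inr t) st (.inr w) sw tw stw)
    (hsw : ∃ z, sw = .inr z) (hst : s.1 ≠ t.1) : w.1 ≠ s.1 := by
  obtain ⟨v₁, a₁⟩ := s
  obtain ⟨v₂, a₂⟩ := t
  obtain ⟨v, b⟩ := w
  obtain ⟨⟨v', b'⟩, rfl⟩ := hsw
  rintro (rfl : v = v₁)
  obtain ⟨v₃, a₃, rfl, c, -⟩ := MooreTriples.third_of_ne hV hst h.line_s_t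
  obtain ⟨u, _, rfl, c', -⟩ := MooreTriples.third_of_ne hV (Ne.symm c.2.1) h.line_st_w
  obtain rfl := hV.third_unique c.rotate.rotate c'
  have e : v' = v := by
    by_contra hne
    obtain ⟨_, _, e, c'', -⟩ := MooreTriples.third_of_ne hV (Ne.symm hne) h.line_s_w.swap_right
    simp only [Sum.inr.injEq, Prod.mk.injEq] at e
    exact c''.2.1 e.1
  subst e
  obtain ⟨_, _, e, c'', -⟩ := MooreTriples.third_of_ne hV (Ne.symm hst) h.line_t_sw
  simp only [Sum.inr.injEq, Prod.mk.injEq] at e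
  exact c''.2.1 e.1

lemma IsFano.sq_eq_of_inr {δ α γ A : Type*} [Fintype δ] [Fintype α] [Fintype A] [CommGroup A]
    {TX : Finset (Finset δ)} {TV : Finset (Finset α)} {TY : Finset (Finset γ)}
    {j : δ → γ} {ℓ : A → γ} (hV : IsSTS TV) {s t w sw tw stw : α × A} {st : δ ⊕ α × A}
    (h : IsFano (MooreTriples TX TV TY j ℓ) (.inr s) (.inr t) st (.inr w) (.inr sw) (.inr tw)
      (.inr stw)) (hst : s.1 ≠ t.1) : s.2 * s.2 = t.2 * t.2 := by
  have key : ∀ {p q r : α × A}, p.1 ≠ q.1 →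
      Collinear3 (MooreTriples TX TV TY j ℓ) (.inr p) (.inr q) (.inr r) →
      p.2 * q.2 * r.2 = 1 := by
    intro p q r hpq hc
    obtain ⟨_, _, e, -, hm⟩ := MooreTriples.third_of_ne hV hpq hc
    simp only [Sum.inr.injEq] at e
    rw [e]
    exact hm
  have k₁ := key (h.fst_ne hV ⟨_, rfl⟩ hst).symm h.line_s_w
  have k₂ := key (h.swap.fst_ne hV ⟨_, rfl⟩ hst.symm).symm h.line_t_w
  have k₃ := key (h.add_right.fst_ne hV ⟨_, rfl⟩ hst).symm h.line_s_tw
  have k₄ := key (h.swap.add_right.fst_ne hV ⟨_, rfl⟩ hst.symm).symm h.line_t_sw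
  have e₁ : s.2 * s.2 * (w.2 * sw.2 * tw.2 * stw.2) = 1 := by
    calc _ = (s.2 * w.2 * sw.2) * (s.2 * tw.2 * stw.2) := by ac_rfl
      _ = 1 := by rw [k₁, k₃, one_mul]
  have e₂ : t.2 * t.2 * (w.2 * sw.2 * tw.2 * stw.2) = 1 := by
    calc _ = (t.2 * w.2 * tw.2) * (t.2 * sw.2 * stw.2) := by ac_rfl
      _ = 1 := by rw [k₂, k₄, one_mul]
  exact mul_right_cancel (e₁.trans e₂.symm)

/-- A Fano plane of Moore's system through a point of `X` and two points over different points of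
`V` contains the translate of the first of these by an involution. -/
lemma IsFano.exists_of_inl {δ α γ A : Type*} [Fintype δ] [Fintype α] [Fintype A] [CommGroup A]
    {TX : Finset (Finset δ)} {TV : Finset (Finset α)} {TY : Finset (Finset γ)}
    {j : δ → γ} {ℓ : A → γ} (hV : IsSTS TV) {x : δ} {s t : α × A} {st sw tw stw : δ ⊕ α × A}
    (h : IsFano (MooreTriples TX TV TY j ℓ) (.inr s) (.inr t) st (.inl x) sw tw stw)
    (hst : s.1 ≠ t.1) : ∃ b, sw = .inr (s.1, b) ∧ b ≠ s.2 ∧ b * b = s.2 * s.2 := by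
  obtain ⟨v₁, a₁⟩ := s
  obtain ⟨v₂, a₂⟩ := t
  obtain ⟨v₃, a₃, rfl, c, m⟩ := MooreTriples.third_of_ne hV hst h.line_s_t
  obtain ⟨b₁, rfl⟩ := MooreTriples.third_of_inl h.line_s_w.swap
  obtain ⟨b₂, rfl⟩ := MooreTriples.third_of_inl h.line_t_w.swap
  obtain ⟨b₃, rfl⟩ := MooreTriples.third_of_inl h.line_st_w.swap
  obtain ⟨_, _, e₁, -, m₁⟩ := MooreTriples.third_of_ne hV hst h.line_s_tw
  obtain ⟨_, _, e₂, -, m₂⟩ := MooreTriples.third_of_ne hV (Ne.symm hst) h.line_t_sw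
  obtain ⟨_, _, e₃, -, m₃⟩ := MooreTriples.third_of_ne hV hst h.line_sw_tw
  simp only [Sum.inr.injEq, Prod.mk.injEq] at e₁ e₂ e₃
  obtain ⟨-, rfl⟩ := e₁
  obtain ⟨-, rfl⟩ := e₂
  obtain ⟨-, rfl⟩ := e₃
  refine ⟨b₁, rfl, ?_, ?_⟩
  · rintro rfl
    exact h.line_s_w.2.1 rfl
  · have e₁ : b₁ * b₁ * (b₂ * b₃ * a₂ * a₃) = 1 := by
      calc _ = (a₂ * b₁ * b₃) * (b₁ * b₂ * a₃) := by ac_rfl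
        _ = 1 := by rw [m₂, m₃, one_mul]
    have e₂ : a₁ * a₁ * (b₂ * b₃ * a₂ * a₃) = 1 := by
      calc _ = (a₁ * b₂ * b₃) * (a₁ * a₂ * a₃) := by ac_rfl
        _ = 1 := by rw [m₁, m, one_mul]
    exact mul_right_cancel (e₁.trans e₂.symm)

/-- In a finite cyclic group every element has at most two square roots. -/
lemma card_sqrt_le_two {A : Type*} [CommGroup A] [Fintype A] [IsCyclic A] (c : A) :
    #{b : A | b * b = c} ≤ 2 := by
  by_cases h : ∃ b₀ : A, b₀ * b₀ = c
  · obtain ⟨b₀, rfl⟩ := h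
    refine le_trans ?_ (IsCyclic.card_pow_eq_one_le (α := A) (n := 2) two_pos)
    refine Finset.card_le_card_of_injOn (fun b => b * b₀⁻¹) ?_ ?_
    · intro b hb
      simp only [Finset.coe_filter, Finset.mem_univ, true_and, Set.mem_ofPred_eq] at hb ⊢
      rw [mul_pow, pow_two, hb, ← pow_two, ← mul_pow, mul_inv_cancel, one_pow]
    · intro b _ b' _ e
      exact mul_right_cancel e
  · push Not at h
    simp [Finset.filter_eq_empty_iff.2 fun b _ => h b]

/-- A Fano plane of Moore's system with two points `p`, `q` over different points of `V` either has
`A`-coordinates with equal squares there, or contains the translate of `p` by an involution. -/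
lemma IsFano.sq_eq_or_exists {δ α γ A : Type*} [Fintype δ] [Fintype α] [Fintype A] [CommGroup A]
    {TX : Finset (Finset δ)} {TV : Finset (Finset α)} {TY : Finset (Finset γ)}
    {j : δ → γ} {ℓ : A → γ} (hV : IsSTS TV) {p q : α × A} {st w sw tw stw : δ ⊕ α × A}
    (h : IsFano (MooreTriples TX TV TY j ℓ) (.inr p) (.inr q) st w sw tw stw)
    (hpq : p.1 ≠ q.1) :
    p.2 * p.2 = q.2 * q.2 ∨ ∃ b, b ≠ p.2 ∧ b * b = p.2 * p.2 ∧
      (w = .inr (p.1, b) ∨ sw = .inr (p.1, b) ∨ tw = .inr (p.1, b) ∨ stw = .inr (p.1, b)) := by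
  rcases w with x | w
  · obtain ⟨b, hb, hb'⟩ := h.exists_of_inl hV hpq
    exact .inr ⟨b, hb'.1, hb'.2, by tauto⟩
  rcases sw with x | sw
  · obtain ⟨b, hb, hb'⟩ := h.add_left.exists_of_inl hV hpq
    exact .inr ⟨b, hb'.1, hb'.2, by tauto⟩
  rcases tw with x | tw
  · obtain ⟨b, hb, hb'⟩ := h.add_right.exists_of_inl hV hpq
    exact .inr ⟨b, hb'.1, hb'.2, by tauto⟩
  rcases stw with x | stw
  · obtain ⟨b, hb, hb'⟩ := h.add_left.add_right.exists_of_inl hV hpq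
    exact .inr ⟨b, hb'.1, hb'.2, by tauto⟩
  exact .inl (h.sq_eq_of_inr hV hpq)

/-- The same dichotomy for a copy of `PG(2,2)` in Moore's system. -/
lemma sq_eq_or_exists_of_PG {δ α γ A : Type*} [Fintype δ] [Fintype α] [Fintype A]
    [CommGroup A]
    {TX : Finset (Finset δ)} {TV : Finset (Finset α)} {TY : Finset (Finset γ)}
    {j : δ → γ} {ℓ : A → γ} (hV : IsSTS TV) {f : PGPoint 2 → δ ⊕ α × A}
    (hf : PreservesLines (PGTriples 2) (MooreTriples TX TV TY j ℓ) f)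
    {s t : PGPoint 2} {p q : α × A} (hs : f s = .inr p) (ht : f t = .inr q) (hpq : p.1 ≠ q.1) :
    p.2 * p.2 = q.2 * q.2 ∨
      ∃ r b, f r = .inr (p.1, b) ∧ r.1 ≠ s.1 + t.1 ∧ b ≠ p.2 ∧ b * b = p.2 * p.2 := by
  have hst : s ≠ t := by
    rintro rfl
    exact hpq (by rw [Sum.inr.inj (hs.symm.trans ht)])
  obtain ⟨w, hw₀, hws, hwt, hw⟩ := exists_off_line s.1 t.1
  obtain ⟨st, sw, tw, stw, hF, -⟩ := exists_isFano_PG (w := ⟨w, hw₀⟩) hst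
    (fun e => hws (Subtype.ext_iff.1 e)) (fun e => hwt (Subtype.ext_iff.1 e)) hw
  have hF' := hF.map hf
  rw [hs, ht] at hF'
  rcases hF'.sq_eq_or_exists hV hpq with h | ⟨b, hb, hb', h⟩
  · exact .inl h
  have off : ∀ r, f r = .inr (p.1, b) → r.1 ≠ s.1 + t.1 := by
    intro r hr e
    have c := hf (collinear3_PG hst e.symm)
    rw [hs, ht, hr] at c
    obtain ⟨_, _, e', c', -⟩ := MooreTriples.third_of_ne hV hpq c
    simp only [Sum.inr.injEq, Prod.mk.injEq] at e'
    exact c'.2.1 e'.1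
  rcases h with h | h | h | h <;> exact .inr ⟨_, b, h, off _ h, hb, hb'⟩

/-- A copy of `PG(2,2)` sharing three noncollinear points with another copy lies in it. -/
lemma image_subset_of_noncollinear {γ : Type*} {T : Finset (Finset γ)} (hT : IsSTS T)
    {f g : PGPoint 2 → γ} (hf : PreservesLines (PGTriples 2) T f)
    (hg : PreservesLines (PGTriples 2) T g) {s t r : PGPoint 2}
    (hst : s ≠ t) (hrs : r ≠ s) (hrt : r ≠ t) (hr : r.1 ≠ s.1 + t.1)
    (hs : f s ∈ Set.range g) (ht : f t ∈ Set.range g) (hr' : f r ∈ Set.range g) (x : PGPoint 2) :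
    f x ∈ Set.range g := by
  have closed : ∀ {a b c}, Collinear3 (PGTriples 2) a b c → f a ∈ Set.range g →
      f b ∈ Set.range g → f c ∈ Set.range g := by
    rintro a b c h ⟨a', ha⟩ ⟨b', hb⟩
    have hc := hf h
    have hne : a' ≠ b' := by
      rintro rfl
      exact hc.1 (ha.symm.trans hb)
    have hne' : a'.1 + b'.1 ≠ 0 := fun e => hne (Subtype.ext (CharTwo.add_eq_zero.1 e))
    have hc' := hg (collinear3_PG (z := ⟨_, hne'⟩) hne rfl)
    rw [ha, hb] at hc'
    exact ⟨_, hT.third_unique hc' hc⟩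
  obtain ⟨st, sr, tr, str, hF, hx⟩ := exists_isFano_PG hst hrs hrt hr
  have h₁ := closed hF.line_s_t hs ht
  have h₂ := closed hF.line_s_w hs hr'
  have h₃ := closed hF.line_t_w ht hr'
  have h₄ := closed hF.line_st_w h₁ hr'
  rcases hx x with rfl | rfl | rfl | rfl | rfl | rfl | rfl <;> assumption

/-- In Moore's system, two points of a `PG(2,2)`-paired subsystem over different points of `V` have
`A`-coordinates with equal squares. -/
lemma sq_eq_of_paired {δ α γ A : Type*} [Fintype δ] [Fintype α] [Fintype γ] [Fintype A]
    [CommGroup A] [IsCyclic A]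
    {TX : Finset (Finset δ)} {TV : Finset (Finset α)} {TY : Finset (Finset γ)}
    {j : δ → γ} {ℓ : A → γ} (hV : IsSTS TV) (hY : IsSTS TY) (hPaired : PG22Paired TY)
    {ψ : γ → δ ⊕ α × A} (hψ : Function.Injective ψ)
    (hL : PreservesLines TY (MooreTriples TX TV TY j ℓ) ψ)
    {y z : γ} {p q : α × A} (hy : ψ y = .inr p) (hz : ψ z = .inr q) (hpq : p.1 ≠ q.1) :
    p.2 * p.2 = q.2 * q.2 := by
  by_contra hne
  have hyz : y ≠ z := by
    rintro rfl
    exact hpq (by rw [Sum.inr.inj (hy.symm.trans hz)])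
  have key : ∀ φ : PGPoint 2 → γ, IsCopy (PGTriples 2) TY φ → ∀ s t, φ s = y → φ t = z →
      ∃ r b, ψ (φ r) = .inr (p.1, b) ∧ r.1 ≠ s.1 + t.1 ∧ b ≠ p.2 ∧ b * b = p.2 * p.2 := by
    intro φ hφ s t hs ht
    exact (sq_eq_or_exists_of_PG (f := ψ ∘ φ) hV (fun _ _ _ h => hL (hφ.preservesLines h))
      (s := s) (t := t) (by simp [hs, hy]) (by simp [ht, hz]) hpq).resolve_left hne
  obtain ⟨W₁, W₂, hW, ⟨hy₁, hz₁, φ₁, hφ₁, rfl⟩, hy₂, hz₂, φ₂, hφ₂, rfl⟩ := hPaired y z hyz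
  simp only [Finset.mem_image, Finset.mem_univ, true_and] at hy₁ hy₂ hz₁ hz₂
  obtain ⟨s₁, hs₁⟩ := hy₁
  obtain ⟨t₁, ht₁⟩ := hz₁
  obtain ⟨s₂, hs₂⟩ := hy₂
  obtain ⟨t₂, ht₂⟩ := hz₂
  obtain ⟨r₁, b₁, hr₁, hoff, hb₁, hb₁'⟩ := key φ₁ hφ₁ s₁ t₁ hs₁ ht₁
  obtain ⟨r₂, b₂, hr₂, -, hb₂, hb₂'⟩ := key φ₂ hφ₂ s₂ t₂ hs₂ ht₂
  have hb : b₁ = b₂ := by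
    by_contra hb
    have h3 : 2 < #{b : A | b * b = p.2 * p.2} :=
      Finset.two_lt_card.2 ⟨p.2, by simp, b₁, by simp [hb₁'], b₂, by simp [hb₂'], hb₁.symm,
        hb₂.symm, hb⟩
    exact absurd (card_sqrt_le_two (p.2 * p.2)) (by convert h3.not_ge)
  subst hb
  have hr : φ₁ r₁ = φ₂ r₂ := hψ (hr₁.trans hr₂.symm)
  have hst : s₁ ≠ t₁ := by
    rintro rfl
    exact hyz (hs₁.symm.trans ht₁)
  have hrs : r₁ ≠ s₁ := by
    rintro rfl
    rw [hs₁, hy] at hr₁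
    exact hb₁ (congrArg Prod.snd (Sum.inr.inj hr₁)).symm
  have hrt : r₁ ≠ t₁ := by
    rintro rfl
    rw [ht₁, hz] at hr₁
    exact hpq (congrArg Prod.fst (Sum.inr.inj hr₁)).symm
  apply hW
  refine Finset.eq_of_subset_of_card_le ?_ ?_
  · intro u hu
    obtain ⟨x, -, rfl⟩ := Finset.mem_image.1 hu
    obtain ⟨x', hx'⟩ := image_subset_of_noncollinear hY hφ₁.preservesLines
      hφ₂.preservesLines hst hrs hrt hoff ⟨s₂, hs₂.trans hs₁.symm⟩ ⟨t₂, ht₂.trans ht₁.symm⟩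
      ⟨r₂, hr.symm⟩ x
    exact Finset.mem_image.2 ⟨x', Finset.mem_univ _, hx'⟩
  · rw [Finset.card_image_of_injective _ hφ₁.1, Finset.card_image_of_injective _ hφ₂.1]

/-- **Proposition 3.5(i).** In Moore's construction with `A` of even order, `Y`
`PG(2,2)`-paired and `|Y| − |X| > 6|V|`, every subsystem of `U` isomorphic to `Y`
is of the form `Y_v`. -/
theorem stmt11 {δ α γ A : Type*} [Fintype δ] [Fintype α] [Fintype γ] [Fintype A]
    [Group A] (TX : Finset (Finset δ)) (TV : Finset (Finset α))
    (TY : Finset (Finset γ)) (j : δ → γ) (ℓ : A → γ)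
    (hM : MooreSetup TX TV TY j ℓ)
    (hEven : Even (Fintype.card A)) (hPaired : PG22Paired TY)
    (hgap : 6 * Fintype.card α < Fintype.card γ - Fintype.card δ)
    (W : Finset (δ ⊕ α × A)) (ψ : γ → δ ⊕ α × A)
    (hψ : IsCopy TY (MooreTriples TX TV TY j ℓ) ψ)
    (hWψ : Finset.univ.image ψ = W) :
    ∃ v : α, W = MooreY (δ := δ) (A := A) v := by
  obtain ⟨hY, hV, hcyc, hj, -, -, hℓ, hrange⟩ := hM
  let : CommGroup A := IsCyclic.commGroup
  have hcard : Fintype.card γ = Fintype.card δ + Fintype.card A := by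
    have hbij : Function.Bijective (Sum.elim j ℓ) := by
      refine ⟨hj.sumElim hℓ fun x a e => ?_, fun y => ?_⟩
      · have : ℓ a ∈ (Set.range j)ᶜ := hrange ▸ Set.mem_range_self a
        exact this ⟨x, e⟩
      · by_cases hy : y ∈ Set.range j
        · obtain ⟨x, rfl⟩ := hy
          exact ⟨.inl x, rfl⟩
        · obtain ⟨a, rfl⟩ : y ∈ Set.range ℓ := hrange ▸ hy
          exact ⟨.inr a, rfl⟩
    rw [← Fintype.card_of_bijective hbij, Fintype.card_sum]
  have hWcard : #W = Fintype.card γ := by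
    rw [← hWψ, Finset.card_image_of_injective _ hψ.1, Finset.card_univ]
  have hS : Fintype.card γ - Fintype.card δ ≤ #W.toRight := by
    have h₁ := W.card_toLeft_add_card_toRight
    have h₂ := Finset.card_le_univ W.toLeft
    omega
  obtain ⟨v, -, hv⟩ := Finset.exists_lt_card_fiber_of_mul_lt_card_of_maps_to
    (s := W.toRight) (t := (Finset.univ : Finset α)) (f := Prod.fst) (n := 6)
    (fun _ _ => Finset.mem_univ _) (by rw [Finset.card_univ]; omega)
  have hmem : ∀ u, u ∈ W → ∃ y, ψ y = u := by
    intro u hu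
    rw [← hWψ] at hu
    simpa using hu
  have hfst : ∀ p : α × A, .inr p ∈ W → p.1 = v := by
    intro p hp
    by_contra hpv
    have hle : #{q ∈ W.toRight | q.1 = v} ≤ #{b : A | b * b = p.2 * p.2} := by
      refine Finset.card_le_card_of_injOn Prod.snd ?_ ?_
      · intro q hq
        simp only [Finset.coe_filter, Finset.mem_toRight, Set.mem_ofPred_eq] at hq
        obtain ⟨y, hy⟩ := hmem _ hp
        obtain ⟨z, hz⟩ := hmem _ hq.1
        simpa using (sq_eq_of_paired hV hY hPaired hψ.1 hψ.preservesLines hy hz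
          (by rw [hq.2]; exact hpv)).symm
      · intro q hq q' hq' e
        simp only [Finset.coe_filter, Set.mem_ofPred_eq] at hq hq'
        exact Prod.ext (hq.2.trans hq'.2.symm) e
    have := card_sqrt_le_two (p.2 * p.2)
    omega
  refine ⟨v, Finset.eq_of_subset_of_card_le ?_ ?_⟩
  · rintro (x | p) hu
    · simp [MooreY]
    · simp [MooreY, ← hfst p hu]
  · rw [hWcard, hcard]
    refine (Finset.card_union_le _ _).trans (Nat.add_le_add ?_ ?_) <;>
      exact Finset.card_image_le

end
end

section
/- In Moore's construction U = X ∪ (V × A), assume the cyclic group A has even order and every point of V lies in a subsystem of V isomorphic to PG(3,2). If W is a subsystem of U isomorphic to V and W meets each subsystem Y_v (v ∈ V) in at most one point, then W = V_{V,f} = {(v,f(v)) : v ∈ V} for some map f : V → A_6 satisfying f(v1)f(v2)f(v3) = 1 for every triple {v1,v2,v3} of V. -/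
open Finset

noncomputable section
open scoped Classical

/-- A map from the Fano plane to a commutative group whose product on each line is `1`
takes values of exponent `6`. -/
theorem pow_six_eq_one_of_fano {A : Type*} [CommGroup A] {a b c d e p q : A}
    (habc : a * b * c = 1) (hade : a * d * e = 1) (hapq : a * p * q = 1)
    (hbdp : b * d * p = 1) (hbeq : b * e * q = 1) (hcdq : c * d * q = 1)
    (hcep : c * e * p = 1) : a ^ 6 = 1 := by
  have key : a ^ 6 * ((b * d * p) * (b * e * q) * (c * d * q) * (c * e * p)) =
      (a * b * c) ^ 2 * (a * d * e) ^ 2 * (a * p * q) ^ 2 := by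
    simp only [pow_succ, pow_zero, one_mul]
    ac_rfl
  simpa [habc, hade, hapq, hbdp, hbeq, hcdq, hcep] using key

theorem add_ne_zero_iff_ne_of_zmod_two {n : ℕ} {x y : Fin (n + 1) → ZMod 2} :
    x + y ≠ 0 ↔ x ≠ y := by
  rw [Ne, CharTwo.add_eq_zero]

theorem line_mem_PGTriples {n : ℕ} {x y z : PGPoint n}
    (h : x.1 + y.1 + z.1 = 0) : ({x, y, z} : Finset (PGPoint n)) ∈ PGTriples n := by
  have hxy : x ≠ y := by
    rintro rfl
    exact z.2 (by simpa [CharTwo.add_self_eq_zero] using h)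
  have hxz : x ≠ z := by
    rintro rfl
    exact y.2 (by simpa [add_right_comm, CharTwo.add_self_eq_zero] using h)
  have hyz : y ≠ z := by
    rintro rfl
    exact x.2 (by simpa [add_assoc, CharTwo.add_self_eq_zero] using h)
  simp only [PGTriples, Finset.mem_filter, Finset.mem_univ, true_and]
  refine ⟨Finset.card_eq_three.2 ⟨x, y, z, hxy, hxz, hyz, rfl⟩, ?_⟩
  rw [Finset.sum_insert (by simp [hxy, hxz]), Finset.sum_insert (by simp [hyz]),
    Finset.sum_singleton, ← add_assoc, h]

/-- Every point `x` of `PG(3,2)` lies in a plane, spanned by `x`, `y`, `z`. -/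
theorem exists_plane_through (x : Fin 4 → ZMod 2) :
    ∃ y z : Fin 4 → ZMod 2, y ≠ 0 ∧ z ≠ 0 ∧ x + y ≠ 0 ∧ x + z ≠ 0 ∧ y + z ≠ 0 ∧
      x + y + z ≠ 0 := by
  have avoid : ∀ s : Finset (Fin 4 → ZMod 2), s.card ≤ 4 → ∃ y, y ∉ s := by
    intro s hs
    by_contra! hall
    have := Finset.card_le_card (fun y _ => hall y : (Finset.univ : Finset _) ⊆ s)
    rw [Finset.card_univ, Fintype.card_fun, ZMod.card, Fintype.card_fin] at this
    omega
  obtain ⟨y, hy⟩ := avoid {0, x} (Finset.card_le_two.trans (by norm_num))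
  obtain ⟨z, hz⟩ := avoid {0, x, y, x + y} Finset.card_le_four
  simp only [Finset.mem_insert, Finset.mem_singleton, not_or] at hy hz
  simp only [add_ne_zero_iff_ne_of_zmod_two]
  exact ⟨y, z, hy.1, hz.1, Ne.symm hy.2, Ne.symm hz.2.1, Ne.symm hz.2.2.1, Ne.symm hz.2.2.2⟩

theorem pow_six_eq_one_of_PGTriples {A : Type*} [CommGroup A] (g : PGPoint 3 → A)
    (hg : ∀ a b c : PGPoint 3, ({a, b, c} : Finset (PGPoint 3)) ∈ PGTriples 3 →
      g a * g b * g c = 1) (x : PGPoint 3) : g x ^ 6 = 1 := by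
  obtain ⟨y, z, hy, hz, hxy, hxz, hyz, hxyz⟩ := exists_plane_through x.1
  have line : ∀ a b c : PGPoint 3, a.1 + b.1 + c.1 = 0 → g a * g b * g c = 1 :=
    fun a b c h => hg a b c (line_mem_PGTriples h)
  have two : ∀ u : Fin 4 → ZMod 2, u + u = 0 := CharTwo.add_self_eq_zero
  apply pow_six_eq_one_of_fano (b := g ⟨y, hy⟩) (c := g ⟨x.1 + y, hxy⟩) (d := g ⟨z, hz⟩)
    (e := g ⟨x.1 + z, hxz⟩) (p := g ⟨y + z, hyz⟩) (q := g ⟨x.1 + y + z, hxyz⟩) <;>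
  · apply line
    simp [add_left_comm, add_comm, two]

/-- A transversal `{(v, f v)}` of the fibres that is closed under the third point of the
triple through any two of its points is of the form `V_{V,f}`. -/
theorem mul_eq_one_of_transversal {δ α γ A : Type*} [Fintype δ] [Fintype α] [Fintype A]
    [CommGroup A] {TX : Finset (Finset δ)} {TV : Finset (Finset α)}
    {TY : Finset (Finset γ)} {j : δ → γ} {ℓ : A → γ} (hV : IsSTS TV) (f : α → A)
    (hclosed : ∀ v w : α, v ≠ w → ∃ t ∈ MooreTriples TX TV TY j ℓ,
      Sum.inr (v, f v) ∈ t ∧ Sum.inr (w, f w) ∈ t ∧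
        ∀ p ∈ t, ∃ u : α, p = Sum.inr (u, f u))
    {v₁ v₂ v₃ : α} (hv : ({v₁, v₂, v₃} : Finset α) ∈ TV) :
    f v₁ * f v₂ * f v₃ = 1 := by
  have prod_triple : ∀ a b c : α, ({a, b, c} : Finset α) ∈ TV →
      ∏ v ∈ ({a, b, c} : Finset α), f v = f a * f b * f c ∧ a ≠ b := by
    intro a b c h
    have hcard := hV.1 _ h
    have hab : a ≠ b := by
      rintro rfl
      have := Finset.card_le_two (a := a) (b := c)
      simp only [Finset.insert_idem] at hcard
      omega
    have hac : a ≠ c := by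
      rintro rfl
      have := Finset.card_le_two (a := b) (b := a)
      simp only [Finset.insert_eq_of_mem, Finset.mem_insert, Finset.mem_singleton, or_true]
        at hcard
      omega
    have hbc : b ≠ c := by
      rintro rfl
      have := Finset.card_le_two (a := a) (b := b)
      simp only [Finset.pair_eq_singleton] at hcard
      omega
    rw [Finset.prod_insert (by simp [hab, hac]), Finset.prod_insert (by simp [hbc]),
      Finset.prod_singleton, mul_assoc]
    exact ⟨rfl, hab⟩
  have hne := (prod_triple _ _ _ hv).2
  obtain ⟨t, ht, h₁, h₂, hf⟩ := hclosed v₁ v₂ hne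
  simp only [MooreTriples, Finset.mem_filter, Finset.mem_univ, true_and] at ht
  rcases ht with ⟨s, -, rfl⟩ | ⟨v, a₁, a₂, x, -, rfl⟩ | ⟨v, a₁, a₂, a₃, -, rfl⟩ |
    ⟨w₁, w₂, w₃, a₁, a₂, a₃, hw, ha, rfl⟩
  · simp at h₁
  · refine absurd ?_ hne
    simp only [Finset.mem_insert, Finset.mem_singleton, Sum.inr.injEq, Prod.mk.injEq,
      reduceCtorEq, or_false] at h₁ h₂
    grind
  · refine absurd ?_ hne
    simp only [Finset.mem_insert, Finset.mem_singleton, Sum.inr.injEq, Prod.mk.injEq]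
      at h₁ h₂
    grind
  · have value : ∀ (w : α) (a : A), (∃ u : α, (Sum.inr (w, a) : δ ⊕ α × A) =
        Sum.inr (u, f u)) → a = f w := by
      rintro w a ⟨u, hu⟩
      simp only [Sum.inr.injEq, Prod.mk.injEq] at hu
      rw [hu.1, hu.2]
    have e₁ := value w₁ a₁ (hf _ (by simp))
    have e₂ := value w₂ a₂ (hf _ (by simp))
    have e₃ := value w₃ a₃ (hf _ (by simp))
    have m₁ : v₁ ∈ ({w₁, w₂, w₃} : Finset α) := by
      simp only [Finset.mem_insert, Finset.mem_singleton, Sum.inr.injEq, Prod.mk.injEq] at h₁ ⊢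
      tauto
    have m₂ : v₂ ∈ ({w₁, w₂, w₃} : Finset α) := by
      simp only [Finset.mem_insert, Finset.mem_singleton, Sum.inr.injEq, Prod.mk.injEq] at h₂ ⊢
      tauto
    have heq := (hV.2 v₁ v₂ hne).unique ⟨hv, by simp, by simp⟩ ⟨hw, m₁, m₂⟩
    rw [← (prod_triple _ _ _ hv).1, heq, (prod_triple _ _ _ hw).1, ← e₁, ← e₂, ← e₃, ha]

/-- A set of `|V|` points meeting each `Y_v` in at most one point is, when `V` has at least
two points, a transversal `{(v, f v)}` of the fibres. -/
theorem exists_transversal {δ α A : Type*} [Fintype δ] [Fintype α] [Fintype A] [Nontrivial α]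
    {φ : α → δ ⊕ α × A} (hφ : Function.Injective φ)
    (hMeet : ∀ v : α, (Finset.univ.image φ ∩ MooreY (δ := δ) (A := A) v).card ≤ 1) :
    ∃ (f : α → A) (σ : α ≃ α), ∀ v, φ v = Sum.inr (σ v, f (σ v)) := by
  have same : ∀ v u u' : α, φ u ∈ MooreY (δ := δ) (A := A) v →
      φ u' ∈ MooreY (δ := δ) (A := A) v → u = u' := fun v u u' hu hu' =>
    hφ (Finset.card_le_one.1 (hMeet v) _ (by simp [hu]) _ (by simp [hu']))
  have exists_inr : ∀ u : α, ∃ p : α × A, φ u = Sum.inr p := by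
    intro u
    rcases hu : φ u with x | p
    · obtain ⟨u', hne⟩ := exists_ne u
      rcases hu' : φ u' with x' | p
      · exact absurd (same u u' u (by simp [MooreY, hu']) (by simp [MooreY, hu])) hne
      · exact absurd (same p.1 u' u (by simp [MooreY, hu']) (by simp [MooreY, hu])) hne
    · exact ⟨p, rfl⟩
  choose p hp using exists_inr
  have hinj : Function.Injective fun u => (p u).1 := fun u u' h =>
    same (p u).1 u u' (by simp [MooreY, hp]) (by
      have h : (p u).1 = (p u').1 := h
      simp [MooreY, hp, h])
  let σ : α ≃ α := Equiv.ofBijective _ (Finite.injective_iff_bijective.1 hinj)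
  refine ⟨fun v => (p (σ.symm v)).2, σ, fun v => ?_⟩
  simp only [Equiv.symm_apply_apply, hp]
  rfl

/-- **Proposition 3.5(ii).** In Moore's construction with `A` of even order and every
point of `V` in a `PG(3,2)` subsystem of `V`, every subsystem `W ≅ V` of `U` meeting
each `Y_v` in at most one point has the form `V_{V,f}` for some `f : V → A₆` with
`f(v₁)f(v₂)f(v₃) = 1` on triples of `V`. -/
theorem stmt12 {δ α γ A : Type*} [Fintype δ] [Fintype α] [Fintype γ] [Fintype A]
    [Group A] (TX : Finset (Finset δ)) (TV : Finset (Finset α))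
    (TY : Finset (Finset γ)) (j : δ → γ) (ℓ : A → γ)
    (hM : MooreSetup TX TV TY j ℓ)
    (hEven : Even (Fintype.card A))
    (hPG3 : ∀ v : α, ∃ S : Finset α, v ∈ S ∧ IsPGSub 3 TV S)
    (W : Finset (δ ⊕ α × A)) (φW : α → δ ⊕ α × A)
    (hφ : IsCopy TV (MooreTriples TX TV TY j ℓ) φW)
    (hWφ : Finset.univ.image φW = W)
    (hMeet : ∀ v : α, (W ∩ MooreY (δ := δ) (A := A) v).card ≤ 1) :
    ∃ f : α → A, (∀ v : α, f v ^ 6 = 1) ∧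
      (∀ v₁ v₂ v₃ : α, ({v₁, v₂, v₃} : Finset α) ∈ TV →
        f v₁ * f v₂ * f v₃ = 1) ∧
      W = Finset.univ.image fun v : α => (Sum.inr (v, f v) : δ ⊕ α × A) := by
  obtain ⟨-, hV, hcyc, -⟩ := hM
  let _ : CommGroup A := IsCyclic.commGroup
  obtain ⟨hinj, htri, -⟩ := hφ
  subst hWφ
  rcases isEmpty_or_nonempty α with hα | ⟨⟨v₀⟩⟩
  · exact ⟨isEmptyElim, isEmptyElim, fun v => isEmptyElim v, by simp⟩
  have hnt : Nontrivial α := by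
    obtain ⟨_, -, ψ, hψ, -⟩ := hPG3 v₀
    refine ⟨ψ ⟨Pi.single 0 1, by simp⟩, ψ ⟨Pi.single 1 1, by simp⟩, fun h => ?_⟩
    have := congrFun (Subtype.ext_iff.1 (hψ.1 h)) 0
    simp at this
  obtain ⟨f, σ, hσ⟩ := exists_transversal hinj hMeet
  have hmul : ∀ v₁ v₂ v₃ : α, ({v₁, v₂, v₃} : Finset α) ∈ TV → f v₁ * f v₂ * f v₃ = 1 := by
    intro v₁ v₂ v₃ hv
    refine mul_eq_one_of_transversal (TX := TX) (TY := TY) (j := j) (ℓ := ℓ) hV f ?_ hv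
    intro v w hne
    obtain ⟨t, ⟨ht, hvt, hwt⟩, -⟩ := hV.2 (σ.symm v) (σ.symm w) (by simpa using hne)
    refine ⟨t.image φW, by convert htri t ht, Finset.mem_image.2 ⟨_, hvt, by simp [hσ]⟩,
      Finset.mem_image.2 ⟨_, hwt, by simp [hσ]⟩, fun p hp => ?_⟩
    obtain ⟨u, -, rfl⟩ := Finset.mem_image.1 hp
    exact ⟨σ u, hσ u⟩
  refine ⟨f, fun v => ?_, hmul, ?_⟩
  · obtain ⟨_, hvS, ψ, hψ, rfl⟩ := hPG3 v
    obtain ⟨x, -, rfl⟩ := Finset.mem_image.1 hvS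
    refine pow_six_eq_one_of_PGTriples (fun y => f (ψ y)) (fun a b c h => hmul _ _ _ ?_) x
    simpa [Finset.image_insert] using hψ.2.1 _ h
  · ext p
    simp only [Finset.mem_image, Finset.mem_univ, true_and, hσ]
    exact σ.surjective.exists (p := fun v => (Sum.inr (v, f v) : δ ⊕ α × A) = p) |>.symm

end
end
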